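/- arXiv:2410.12907 — 2 statements merged into one kernel-verified Lean document; each statement's English description precedes it below -/
import Mathlib

section
/- Each of the nine basic W(E8)-invariant holomorphic Jacobi forms A_1, A_2, A_3, A_4, A_5, B_2, B_3, B_4, B_6 belongs to the polynomial ring ℂ[a_0, a_2, a_3, a_4, b_0, b_1, b_2, b_3, b_4, b_5, b_6]; explicitly, one has the identities A_1 = −3 a_0 b_1, A_2 = (9 a_0 b_1² − 2Δ a_2)/12, B_2 = (135 b_0 b_1² + 12Δ b_2)/10, and Δ = a_0³ − 27 b_0², where Δ = (E4³ − E6²)/1728. -/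
noncomputable section

open Complex Finset

namespace E8Jacobi

/-- π as a complex number. -/
def πC : ℂ := Real.pi

/-- The E8 lattice as a subset of ℝ^8. -/
def E8Lattice : Set (Fin 8 → ℝ) :=
  {x | ((∀ i, ∃ n : ℤ, x i = n) ∨ (∀ i, ∃ n : ℤ, x i = n + 1/2)) ∧ ∃ m : ℤ, ∑ i, x i = 2 * m}

/-- Complexification of a real vector. -/
def cv (x : Fin 8 → ℝ) : Fin 8 → ℂ := fun i => (x i : ℂ)

/-- The dot product on ℝ^8. -/
def dotR (x y : Fin 8 → ℝ) : ℝ := ∑ i, x i * y i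

/-- The dot product on ℂ^8. -/
def dotC (z w : Fin 8 → ℂ) : ℂ := ∑ i, z i * w i

/-- The Weyl group W(E8): orthogonal matrices preserving the E8 lattice. -/
def WeylE8 : Set (Matrix (Fin 8) (Fin 8) ℝ) :=
  {M | (∀ x y, dotR (M.mulVec x) (M.mulVec y) = dotR x y) ∧
       (∀ x ∈ E8Lattice, M.mulVec x ∈ E8Lattice) ∧
       (∀ x ∈ E8Lattice, ∃ y ∈ E8Lattice, M.mulVec y = x)}

/-- The complexified (ℂ-linear) action of a real matrix on ℂ^8. -/
def actC (M : Matrix (Fin 8) (Fin 8) ℝ) (z : Fin 8 → ℂ) : Fin 8 → ℂ :=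
  fun i => ∑ j, (M i j : ℂ) * z j

/-- A W(E8)-invariant weak Jacobi form of weight `k` and index `m`. -/
structure IsWeakJacobiFormE8 (k : ℤ) (m : ℕ) (φ : ℂ → (Fin 8 → ℂ) → ℂ) : Prop where
  holo : DifferentiableOn ℂ (fun p : ℂ × (Fin 8 → ℂ) => φ p.1 p.2) {p | 0 < p.1.im}
  weyl_inv : ∀ M ∈ WeylE8, ∀ τ : ℂ, 0 < τ.im → ∀ z, φ τ (actC M z) = φ τ z
  quasi_periodic : ∀ α ∈ E8Lattice, ∀ β ∈ E8Lattice, ∀ τ : ℂ, 0 < τ.im → ∀ z,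
    φ τ (fun i => z i + τ * (α i : ℂ) + (β i : ℂ)) =
      Complex.exp (-(m : ℂ) * πC * I * (τ * dotC (cv α) (cv α) + 2 * dotC z (cv α))) * φ τ z
  modular : ∀ a b c d : ℤ, a * d - b * c = 1 → ∀ τ : ℂ, 0 < τ.im → ∀ z,
    φ (((a : ℂ) * τ + (b : ℂ)) / ((c : ℂ) * τ + (d : ℂ))) (fun i => z i / ((c : ℂ) * τ + (d : ℂ))) =
      ((c : ℂ) * τ + (d : ℂ)) ^ k *
        Complex.exp ((m : ℂ) * πC * I * (c : ℂ) / ((c : ℂ) * τ + (d : ℂ)) * dotC z z) * φ τ z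
  fourier : ∃ co : ℕ → E8Lattice → ℂ, ∀ τ : ℂ, 0 < τ.im → ∀ z,
    φ τ z = ∑' (n : ℕ) (w : E8Lattice), co n w *
      Complex.exp (2 * πC * I * dotC (cv w.1) z) * Complex.exp (2 * πC * I * τ) ^ n

/-- Membership in the ring J^{E8}_{*,*} of W(E8)-invariant weak Jacobi forms:
a finite sum of weak Jacobi forms of various weights and indices. -/
def MemJE8 (φ : ℂ → (Fin 8 → ℂ) → ℂ) : Prop :=
  ∃ (n : ℕ) (k : Fin n → ℤ) (m : Fin n → ℕ) (ψ : Fin n → ℂ → (Fin 8 → ℂ) → ℂ),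
    (∀ i, IsWeakJacobiFormE8 (k i) (m i) (ψ i)) ∧
    ∀ τ : ℂ, 0 < τ.im → ∀ z, φ τ z = ∑ i, ψ i τ z

/-- The nome q = e^{2πiτ}. -/
def qExp (τ : ℂ) : ℂ := Complex.exp (2 * πC * I * τ)

/-- The Eisenstein series E4. -/
def E4 (τ : ℂ) : ℂ :=
  1 + 240 * ∑' n : ℕ+, (n : ℂ) ^ 3 * qExp τ ^ (n : ℕ) / (1 - qExp τ ^ (n : ℕ))

/-- The Eisenstein series E6. -/
def E6 (τ : ℂ) : ℂ :=
  1 - 504 * ∑' n : ℕ+, (n : ℂ) ^ 5 * qExp τ ^ (n : ℕ) / (1 - qExp τ ^ (n : ℕ))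

/-- The modular discriminant Δ. -/
def Dl (τ : ℂ) : ℂ := (E4 τ ^ 3 - E6 τ ^ 2) / 1728

/-- The Dedekind eta function. -/
def etaF (τ : ℂ) : ℂ := Complex.exp (2 * πC * I * τ / 24) * ∏' n : ℕ, (1 - qExp τ ^ (n + 1))

/-- The theta function of the E8 lattice. -/
def Theta (τ : ℂ) (z : Fin 8 → ℂ) : ℂ :=
  ∑' w : E8Lattice, Complex.exp (πC * I * τ * dotC (cv w.1) (cv w.1) + 2 * πC * I * dotC z (cv w.1))

/-- The Jacobi theta function θ1. -/
def th1 (z τ : ℂ) : ℂ :=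
  I * ∑' n : ℤ, (-1 : ℂ) ^ n * Complex.exp (2 * πC * I * z * ((n : ℂ) - 1/2)) *
    Complex.exp (πC * I * τ * ((n : ℂ) - 1/2) ^ 2)

/-- The Jacobi theta function θ2. -/
def th2 (z τ : ℂ) : ℂ :=
  ∑' n : ℤ, Complex.exp (2 * πC * I * z * ((n : ℂ) - 1/2)) *
    Complex.exp (πC * I * τ * ((n : ℂ) - 1/2) ^ 2)

/-- The Jacobi theta function θ3. -/
def th3 (z τ : ℂ) : ℂ :=
  ∑' n : ℤ, Complex.exp (2 * πC * I * z * (n : ℂ)) * Complex.exp (πC * I * τ * (n : ℂ) ^ 2)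

/-- The Jacobi theta function θ4. -/
def th4 (z τ : ℂ) : ℂ :=
  ∑' n : ℤ, (-1 : ℂ) ^ n * Complex.exp (2 * πC * I * z * (n : ℂ)) *
    Complex.exp (πC * I * τ * (n : ℂ) ^ 2)

/-- A1 = Θ(τ,z). -/
def A1 (τ : ℂ) (z : Fin 8 → ℂ) : ℂ := Theta τ z

/-- A_m for m = 2, 3, 5. -/
def AM (m : ℕ) (τ : ℂ) (z : Fin 8 → ℂ) : ℂ :=
  ((m : ℂ) ^ 3 / ((m : ℂ) ^ 3 + 1)) *
    (Theta ((m : ℂ) * τ) (fun i => (m : ℂ) * z i) +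
      ((m : ℂ) ^ 4)⁻¹ * ∑ k ∈ Finset.range m, Theta ((τ + (k : ℂ)) / (m : ℂ)) z)

def A2 : ℂ → (Fin 8 → ℂ) → ℂ := AM 2
def A3 : ℂ → (Fin 8 → ℂ) → ℂ := AM 3
def A5 : ℂ → (Fin 8 → ℂ) → ℂ := AM 5

/-- A4 = Θ(τ,2z). -/
def A4 (τ : ℂ) (z : Fin 8 → ℂ) : ℂ := Theta τ (fun i => 2 * z i)

def ee1 (τ : ℂ) : ℂ := (th3 0 τ ^ 4 + th4 0 τ ^ 4) / 12
def ee2 (τ : ℂ) : ℂ := (th2 0 τ ^ 4 - th4 0 τ ^ 4) / 12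
def ee3 (τ : ℂ) : ℂ := (-th2 0 τ ^ 4 - th3 0 τ ^ 4) / 12
def h0 (τ : ℂ) : ℂ := th3 0 (2*τ) * th3 0 (6*τ) + th2 0 (2*τ) * th2 0 (6*τ)

def B2 (τ : ℂ) (z : Fin 8 → ℂ) : ℂ :=
  (32/5) * (ee1 τ * Theta (2*τ) (fun i => 2 * z i)
    + (1/2^4) * ee3 τ * Theta (τ/2) z + (1/2^4) * ee2 τ * Theta ((τ+1)/2) z)

def B3 (τ : ℂ) (z : Fin 8 → ℂ) : ℂ :=
  (81/80) * (h0 τ ^ 2 * Theta (3*τ) (fun i => 3 * z i)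
    - (1/3^5) * ∑ k ∈ Finset.range 3, h0 ((τ + (k:ℂ))/3) ^ 2 * Theta ((τ + (k:ℂ))/3) z)

def B4 (τ : ℂ) (z : Fin 8 → ℂ) : ℂ :=
  (16/15) * (th4 0 (2*τ) ^ 4 * Theta (4*τ) (fun i => 4 * z i)
    - (1/2^4) * th4 0 (2*τ) ^ 4 * Theta (τ + 1/2) (fun i => 2 * z i)
    - (1/(2^2 * 4^4)) * ∑ k ∈ Finset.range 4, th2 0 ((τ + (k:ℂ))/2) ^ 4 * Theta ((τ + (k:ℂ))/4) z)

def B6 (τ : ℂ) (z : Fin 8 → ℂ) : ℂ :=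
  (9/10) * (h0 τ ^ 2 * Theta (6*τ) (fun i => 6 * z i)
    + (1/2^4) * ∑ k ∈ Finset.range 2, h0 (τ + (k:ℂ)) ^ 2 * Theta ((3*τ + 3*(k:ℂ))/2) (fun i => 3 * z i)
    - (1/(3 * 3^4)) * ∑ k ∈ Finset.range 3, h0 ((τ + (k:ℂ))/3) ^ 2 * Theta ((2*τ + 2*(k:ℂ))/3) (fun i => 2 * z i)
    - (1/(3 * 6^4)) * ∑ k ∈ Finset.range 6, h0 ((τ + (k:ℂ))/3) ^ 2 * Theta ((τ + (k:ℂ))/6) z)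

/-- The nine basic W(E8)-invariant holomorphic Jacobi forms A1,…,A5,B2,…,B6. -/
def nineForms : Fin 9 → ℂ → (Fin 8 → ℂ) → ℂ := ![A1, A2, A3, A4, A5, B2, B3, B4, B6]

/- The basic meromorphic Jacobi forms a_i, b_j (Appendix A of the paper). -/

def a0f (τ : ℂ) (_z : Fin 8 → ℂ) : ℂ := E4 τ / 12

def a2f (τ : ℂ) (z : Fin 8 → ℂ) : ℂ :=
  6 / (E4 τ * Dl τ) * (-(E4 τ) * A2 τ z + A1 τ z ^ 2)

def a3f (τ : ℂ) (z : Fin 8 → ℂ) : ℂ :=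
  1 / (9 * E4 τ ^ 2 * Dl τ ^ 2) *
    (-7 * E4 τ ^ 2 * E6 τ * A3 τ z - 20 * E4 τ ^ 3 * B3 τ z
      - 9 * E4 τ * E6 τ * A1 τ z * A2 τ z + 30 * E4 τ ^ 2 * A1 τ z * B2 τ z
      + 6 * E6 τ * A1 τ z ^ 3)

def a4f (τ : ℂ) (z : Fin 8 → ℂ) : ℂ :=
  1 / (288 * E4 τ ^ 3 * Dl τ ^ 3) *
    (576 * E4 τ ^ 3 * Dl τ * A4 τ z + 32256 * E4 τ ^ 2 * Dl τ * A1 τ z * A3 τ z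
      - 9 * E4 τ ^ 5 * A2 τ z ^ 2 - 30 * E4 τ ^ 3 * E6 τ * A2 τ z * B2 τ z
      - 25 * E4 τ ^ 4 * B2 τ z ^ 2
      + (60 * E4 τ ^ 4 - 12 * E4 τ * E6 τ ^ 2) * A1 τ z ^ 2 * A2 τ z
      + 80 * E4 τ ^ 2 * E6 τ * A1 τ z ^ 2 * B2 τ z
      + (-70 * E4 τ ^ 3 + 6 * E6 τ ^ 2) * A1 τ z ^ 4)

def b0f (τ : ℂ) (_z : Fin 8 → ℂ) : ℂ := E6 τ / 216

def b1f (τ : ℂ) (z : Fin 8 → ℂ) : ℂ := -4 / E4 τ * A1 τ z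

def b2f (τ : ℂ) (z : Fin 8 → ℂ) : ℂ :=
  5 / (6 * E4 τ ^ 2 * Dl τ) * (E4 τ ^ 2 * B2 τ z - E6 τ * A1 τ z ^ 2)

def b3f (τ : ℂ) (z : Fin 8 → ℂ) : ℂ :=
  1 / (108 * E4 τ ^ 3 * Dl τ ^ 2) *
    (-7 * E4 τ ^ 5 * A3 τ z - 20 * E4 τ ^ 3 * E6 τ * B3 τ z
      - 9 * E4 τ ^ 4 * A1 τ z * A2 τ z + 30 * E4 τ ^ 2 * E6 τ * A1 τ z * B2 τ z
      + (16 * E4 τ ^ 3 - 10 * E6 τ ^ 2) * A1 τ z ^ 3)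

def b4f (τ : ℂ) (z : Fin 8 → ℂ) : ℂ :=
  1 / (1728 * E4 τ ^ 4 * Dl τ ^ 3) *
    (-8640 * E4 τ ^ 4 * Dl τ * B4 τ z + 138240 * E4 τ ^ 3 * Dl τ * A1 τ z * B3 τ z
      + 9 * E4 τ ^ 5 * E6 τ * A2 τ z ^ 2 + 30 * E4 τ ^ 6 * A2 τ z * B2 τ z
      + 25 * E4 τ ^ 4 * E6 τ * B2 τ z ^ 2
      - 48 * E4 τ ^ 4 * E6 τ * A1 τ z ^ 2 * A2 τ z
      + (-140 * E4 τ ^ 5 + 60 * E4 τ ^ 2 * E6 τ ^ 2) * A1 τ z ^ 2 * B2 τ z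
      + (74 * E4 τ ^ 3 * E6 τ - 10 * E6 τ ^ 3) * A1 τ z ^ 4)

def b5f (τ : ℂ) (z : Fin 8 → ℂ) : ℂ :=
  1 / (72 * E4 τ ^ 5 * Dl τ ^ 3) *
    (-36288 * E4 τ ^ 4 * Dl τ * A5 τ z - 294 * E4 τ ^ 6 * A2 τ z * A3 τ z
      - 770 * E4 τ ^ 4 * E6 τ * B2 τ z * A3 τ z - 840 * E4 τ ^ 4 * E6 τ * A2 τ z * B3 τ z
      - 2200 * E4 τ ^ 5 * B2 τ z * B3 τ z + 168 * E4 τ ^ 5 * A1 τ z ^ 2 * A3 τ z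
      + 480 * E4 τ ^ 3 * E6 τ * A1 τ z ^ 2 * B3 τ z - 621 * E4 τ ^ 5 * A1 τ z * A2 τ z ^ 2
      + 3525 * E4 τ ^ 4 * A1 τ z * B2 τ z ^ 2 + 1224 * E4 τ ^ 4 * A1 τ z ^ 3 * A2 τ z
      - 240 * E4 τ ^ 2 * E6 τ * A1 τ z ^ 3 * B2 τ z
      + (-456 * E4 τ ^ 3 + 24 * E6 τ ^ 2) * A1 τ z ^ 5)

def b6f (τ : ℂ) (z : Fin 8 → ℂ) : ℂ :=
  1 / (4478976 * E4 τ ^ 6 * Dl τ ^ 5) *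
    (-19906560 * E4 τ ^ 6 * Dl τ ^ 2 * B6 τ z
      - 188116992 * E4 τ ^ 4 * E6 τ * Dl τ ^ 2 * A1 τ z * A5 τ z
      - 5184 * E4 τ ^ 7 * E6 τ * Dl τ * A2 τ z * A4 τ z
      - 8640 * E4 τ ^ 8 * Dl τ * B2 τ z * A4 τ z
      - 103680 * E4 τ ^ 8 * Dl τ * A2 τ z * B4 τ z
      - 172800 * E4 τ ^ 6 * E6 τ * Dl τ * B2 τ z * B4 τ z
      + 12672 * E4 τ ^ 6 * E6 τ * Dl τ * A1 τ z ^ 2 * A4 τ z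
      + 17280 * (5 * E4 τ ^ 7 + 9 * E4 τ ^ 4 * E6 τ ^ 2) * Dl τ * A1 τ z ^ 2 * B4 τ z
      + 112896 * E4 τ ^ 7 * E6 τ * Dl τ * A3 τ z ^ 2
      + 645120 * E4 τ ^ 8 * Dl τ * A3 τ z * B3 τ z
      + 921600 * E4 τ ^ 6 * E6 τ * Dl τ * B3 τ z ^ 2
      - 1717632 * E4 τ ^ 6 * E6 τ * Dl τ * A1 τ z * A2 τ z * A3 τ z
      - 362880 * (4 * E4 τ ^ 7 + 11 * E4 τ ^ 4 * E6 τ ^ 2) * Dl τ * A1 τ z * B2 τ z * A3 τ z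
      + 483840 * (4 * E4 τ ^ 7 - 9 * E4 τ ^ 4 * E6 τ ^ 2) * Dl τ * A1 τ z * A2 τ z * B3 τ z
      - 11404800 * E4 τ ^ 5 * E6 τ * Dl τ * A1 τ z * B2 τ z * B3 τ z
      + 1161216 * E4 τ ^ 5 * E6 τ * Dl τ * A1 τ z ^ 3 * A3 τ z
      - 92160 * (37 * E4 τ ^ 6 - 9 * E4 τ ^ 3 * E6 τ ^ 2) * Dl τ * A1 τ z ^ 3 * B3 τ z
      + (135 * E4 τ ^ 9 * E6 τ + 54 * E4 τ ^ 6 * E6 τ ^ 3) * A2 τ z ^ 3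
      + (405 * E4 τ ^ 10 + 540 * E4 τ ^ 7 * E6 τ ^ 2) * A2 τ z ^ 2 * B2 τ z
      + 1575 * E4 τ ^ 8 * E6 τ * A2 τ z * B2 τ z ^ 2
      + (375 * E4 τ ^ 9 + 500 * E4 τ ^ 6 * E6 τ ^ 2) * B2 τ z ^ 3
      + (-3159 * E4 τ ^ 8 * E6 τ + 1701 * E4 τ ^ 5 * E6 τ ^ 3) * A1 τ z ^ 2 * A2 τ z ^ 2
      + (-3060 * E4 τ ^ 9 - 1800 * E4 τ ^ 6 * E6 τ ^ 2) * A1 τ z ^ 2 * A2 τ z * B2 τ z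
      + (6975 * E4 τ ^ 7 * E6 τ - 11025 * E4 τ ^ 4 * E6 τ ^ 3) * A1 τ z ^ 2 * B2 τ z ^ 2
      + (6768 * E4 τ ^ 7 * E6 τ - 3024 * E4 τ ^ 4 * E6 τ ^ 3) * A1 τ z ^ 4 * A2 τ z
      + (4260 * E4 τ ^ 8 + 1800 * E4 τ ^ 5 * E6 τ ^ 2 + 180 * E4 τ ^ 2 * E6 τ ^ 4) * A1 τ z ^ 4 * B2 τ z
      + (-3692 * E4 τ ^ 6 * E6 τ + 504 * E4 τ ^ 3 * E6 τ ^ 3 - 12 * E6 τ ^ 5) * A1 τ z ^ 6)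

/-- The Seiberg–Witten coefficients a_0, …, a_4 (a_1 = 0). -/
def aSW : ℕ → ℂ → (Fin 8 → ℂ) → ℂ
  | 0 => a0f
  | 2 => a2f
  | 3 => a3f
  | 4 => a4f
  | _ => fun _ _ => 0

/-- The Seiberg–Witten coefficients b_0, …, b_6. -/
def bSW : ℕ → ℂ → (Fin 8 → ℂ) → ℂ
  | 0 => b0f
  | 1 => b1f
  | 2 => b2f
  | 3 => b3f
  | 4 => b4f
  | 5 => b5f
  | 6 => b6f
  | _ => fun _ _ => 0

/-- The translation parameter −b₁/(6b₀). -/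
def uShift (τ : ℂ) (z : Fin 8 → ℂ) : ℂ := -(bSW 1 τ z) / (6 * bSW 0 τ z)

/-- The coefficients c_i. -/
def cSW (i : ℕ) (τ : ℂ) (z : Fin 8 → ℂ) : ℂ :=
  ∑ j ∈ Finset.range (i+1), aSW j τ z * (Nat.choose (4-j) (4-i) : ℂ) * uShift τ z ^ (i-j)

/-- The coefficients d_j. -/
def dSW (j : ℕ) (τ : ℂ) (z : Fin 8 → ℂ) : ℂ :=
  ∑ l ∈ Finset.range (j+1), bSW l τ z * (Nat.choose (6-l) (6-j) : ℂ) * uShift τ z ^ (j-l)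

/-- Points of the upper half-plane avoiding the zeros of E4, E6 and Δ
(where all the meromorphic Jacobi forms above are defined). -/
def GoodTau (τ : ℂ) : Prop := 0 < τ.im ∧ E4 τ ≠ 0 ∧ E6 τ ≠ 0 ∧ Dl τ ≠ 0

/-- The eleven generators a_0, a_2, a_3, a_4, b_0, …, b_6 of R. -/
def abGens : Fin 11 → ℂ → (Fin 8 → ℂ) → ℂ :=
  ![aSW 0, aSW 2, aSW 3, aSW 4, bSW 0, bSW 1, bSW 2, bSW 3, bSW 4, bSW 5, bSW 6]

/-- The eleven generators c_0, …, c_4, d_0, d_2, …, d_6 of R̃. -/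
def cdGens : Fin 11 → ℂ → (Fin 8 → ℂ) → ℂ :=
  ![cSW 0, cSW 1, cSW 2, cSW 3, cSW 4, dSW 0, dSW 2, dSW 3, dSW 4, dSW 5, dSW 6]

/-- Membership in the polynomial ring R = ℂ[a_0,a_2,a_3,a_4,b_0,…,b_6]
(as meromorphic functions on ℍ × ℂ^8). -/
def MemR (φ : ℂ → (Fin 8 → ℂ) → ℂ) : Prop :=
  ∃ P : MvPolynomial (Fin 11) ℂ, ∀ τ : ℂ, GoodTau τ → ∀ z,
    φ τ z = MvPolynomial.eval (fun i => abGens i τ z) P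

/-- Membership in the polynomial ring R̃ = ℂ[c_0,…,c_4,d_0,d_2,…,d_6]
(as meromorphic functions on ℍ × ℂ^8). -/
def MemRt (φ : ℂ → (Fin 8 → ℂ) → ℂ) : Prop :=
  ∃ P : MvPolynomial (Fin 11) ℂ, ∀ τ : ℂ, GoodTau τ → ∀ z,
    φ τ z = MvPolynomial.eval (fun i => cdGens i τ z) P

/- Invariant theory of binary forms. -/

/-- `BinTrans n T α α'` says that `α'` is the coefficient family of the degree-`n`
binary form with coefficients `α` transformed by `T ∈ SL2(ℂ)`. -/
def BinTrans (n : ℕ) (T : Matrix (Fin 2) (Fin 2) ℂ) (α α' : ℕ → ℂ) : Prop :=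
  ∀ u v : ℂ,
    ∑ j ∈ Finset.range (n+1), α' j * u ^ (n - j) * v ^ j
      = ∑ i ∈ Finset.range (n+1), α i * (T 0 0 * u + T 0 1 * v) ^ (n - i) *
          (T 1 0 * u + T 1 1 * v) ^ i

/-- Variables for polynomials in the coefficients of a binary quartic and sextic. -/
abbrev SV := Fin 5 ⊕ Fin 7

/-- Evaluation of a polynomial in the coefficients of the quartic and sextic. -/
def evalSV (Φ : MvPolynomial SV ℂ) (α β : ℕ → ℂ) : ℂ :=
  MvPolynomial.eval (Sum.elim (fun i : Fin 5 => α i.1) (fun j : Fin 7 => β j.1)) Φ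

/-- Membership in the ring of joint semiinvariants ℂ[V4 ⊕ V6]^{U2(ℂ)}. -/
def IsSemiinvRingElem (Φ : MvPolynomial SV ℂ) : Prop :=
  ∀ κ : ℂ, ∀ α α' β β' : ℕ → ℂ,
    BinTrans 4 !![1, κ; 0, 1] α α' → BinTrans 6 !![1, κ; 0, 1] β β' →
      evalSV Φ α' β' = evalSV Φ α β

/-- Membership in the ring of joint invariants ℂ[V4 ⊕ V6]^{SL2(ℂ)}. -/
def IsInvRingElem (Φ : MvPolynomial SV ℂ) : Prop :=
  ∀ T : Matrix (Fin 2) (Fin 2) ℂ, T.det = 1 → ∀ α α' β β' : ℕ → ℂ,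
    BinTrans 4 T α α' → BinTrans 6 T β β' → evalSV Φ α' β' = evalSV Φ α β

/-- Variables for joint covariants: coefficients of the two forms together with (u,v). -/
abbrev CVV := (Fin 5 ⊕ Fin 7) ⊕ Fin 2

/-- Evaluation of a polynomial in the coefficients and (u,v). -/
def evalCov (Ψ : MvPolynomial CVV ℂ) (α β : ℕ → ℂ) (u v : ℂ) : ℂ :=
  MvPolynomial.eval
    (Sum.elim (Sum.elim (fun i : Fin 5 => α i.1) (fun j : Fin 7 => β j.1))
      (fun p : Fin 2 => if p = 0 then u else v)) Ψ

/-- Membership in the ring of joint covariants ℂ[V4 ⊕ V6 ⊕ ℂ²]^{SL2(ℂ)}. -/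
def IsCovRingElem (Ψ : MvPolynomial CVV ℂ) : Prop :=
  ∀ T : Matrix (Fin 2) (Fin 2) ℂ, T.det = 1 → ∀ α α' β β' : ℕ → ℂ,
    BinTrans 4 T α α' → BinTrans 6 T β β' → ∀ u v : ℂ,
      evalCov Ψ α' β' u v = evalCov Ψ α β (T 0 0 * u + T 0 1 * v) (T 1 0 * u + T 1 1 * v)

/-- â_i in ℂ[α, β, α₀⁻¹]. -/
def ahat (α : ℕ → ℂ) (i : ℕ) : ℂ :=
  ∑ j ∈ Finset.range (i+1), α j * (Nat.choose (4-j) (4-i) : ℂ) * (-(α 1)/(4 * α 0)) ^ (i-j)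

/-- b̂_i in ℂ[α, β, α₀⁻¹]. -/
def bhat (α β : ℕ → ℂ) (i : ℕ) : ℂ :=
  ∑ j ∈ Finset.range (i+1), β j * (Nat.choose (6-j) (6-i) : ℂ) * (-(α 1)/(4 * α 0)) ^ (i-j)

/-- ĉ_i in ℂ[α, β, β₀⁻¹]. -/
def chat (α β : ℕ → ℂ) (i : ℕ) : ℂ :=
  ∑ j ∈ Finset.range (i+1), α j * (Nat.choose (4-j) (4-i) : ℂ) * (-(β 1)/(6 * β 0)) ^ (i-j)

/-- d̂_i in ℂ[α, β, β₀⁻¹]. -/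
def dhat (β : ℕ → ℂ) (i : ℕ) : ℂ :=
  ∑ j ∈ Finset.range (i+1), β j * (Nat.choose (6-j) (6-i) : ℂ) * (-(β 1)/(6 * β 0)) ^ (i-j)

/-- The images of the eleven generators of R under ψ. -/
def hatGens (α β : ℕ → ℂ) : Fin 11 → ℂ :=
  ![ahat α 0, ahat α 2, ahat α 3, ahat α 4, bhat α β 0, bhat α β 1, bhat α β 2,
    bhat α β 3, bhat α β 4, bhat α β 5, bhat α β 6]

/-- The images of the eleven generators of R̃ under ψ̃. -/
def cdhatGens (α β : ℕ → ℂ) : Fin 11 → ℂ :=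
  ![chat α β 0, chat α β 1, chat α β 2, chat α β 3, chat α β 4, dhat β 0, dhat β 2,
    dhat β 3, dhat β 4, dhat β 5, dhat β 6]

/-- Weights picking out the a-variables among the eleven generators. -/
def wA : Fin 11 → ℕ := ![1, 1, 1, 1, 0, 0, 0, 0, 0, 0, 0]

/-- Weights picking out the b-variables among the eleven generators. -/
def wB : Fin 11 → ℕ := ![0, 0, 0, 0, 1, 1, 1, 1, 1, 1, 1]

/-- Weights picking out the α-variables. -/
def wSVα : SV → ℕ := Sum.elim (fun _ => 1) (fun _ => 0)

/-- Weights picking out the β-variables. -/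
def wSVβ : SV → ℕ := Sum.elim (fun _ => 0) (fun _ => 1)

/-- A joint semiinvariant of the quartic and sextic, of degrees (da, db) and order ω. -/
def IsSemiinvOf (Φ : MvPolynomial SV ℂ) (da db : ℕ) (ω : ℤ) : Prop :=
  MvPolynomial.IsWeightedHomogeneous wSVα Φ da ∧
  MvPolynomial.IsWeightedHomogeneous wSVβ Φ db ∧
  IsSemiinvRingElem Φ ∧
  ∀ l : ℂ, l ≠ 0 → ∀ α α' β β' : ℕ → ℂ,
    BinTrans 4 !![l, 0; 0, l⁻¹] α α' → BinTrans 6 !![l, 0; 0, l⁻¹] β β' →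
      evalSV Φ α' β' = l ^ ω * evalSV Φ α β

/-- Substitution α_i ↦ a_i (with a_1 = 0), β_j ↦ b_j into a polynomial in (α, β). -/
def subAB (Φ : MvPolynomial SV ℂ) : ℂ → (Fin 8 → ℂ) → ℂ :=
  fun τ z => MvPolynomial.eval
    (Sum.elim (fun i : Fin 5 => aSW i.1 τ z) (fun j : Fin 7 => bSW j.1 τ z)) Φ

/-- The graph of the map ψ_J : a Jacobi form φ = Q(a_i, b_j) is sent to the
polynomial Φ = Q(â_i, b̂_j). -/
def PsiJRel (φ : ℂ → (Fin 8 → ℂ) → ℂ) (Φ : MvPolynomial SV ℂ) : Prop :=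
  ∃ Q : MvPolynomial (Fin 11) ℂ,
    (∀ τ : ℂ, GoodTau τ → ∀ z, φ τ z = MvPolynomial.eval (fun i => abGens i τ z) Q) ∧
    (∀ α β : ℕ → ℂ, α 0 ≠ 0 → evalSV Φ α β = MvPolynomial.eval (hatGens α β) Q)

theorem MemR.congr {φ ψ : ℂ → (Fin 8 → ℂ) → ℂ} (hψ : MemR ψ)
    (h : ∀ τ, GoodTau τ → ∀ z, φ τ z = ψ τ z) : MemR φ :=
  let ⟨P, hP⟩ := hψ
  ⟨P, fun τ hτ z => (h τ hτ z).trans (hP τ hτ z)⟩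

theorem MemR.const (c : ℂ) : MemR (fun _ _ => c) :=
  ⟨MvPolynomial.C c, fun _ _ _ => by simp⟩

theorem MemR.add {φ ψ : ℂ → (Fin 8 → ℂ) → ℂ} (hφ : MemR φ) (hψ : MemR ψ) :
    MemR (fun τ z => φ τ z + ψ τ z) :=
  let ⟨P, hP⟩ := hφ
  let ⟨Q, hQ⟩ := hψ
  ⟨P + Q, fun τ hτ z => by simp only [hP τ hτ z, hQ τ hτ z, map_add]⟩

theorem MemR.sub {φ ψ : ℂ → (Fin 8 → ℂ) → ℂ} (hφ : MemR φ) (hψ : MemR ψ) :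
    MemR (fun τ z => φ τ z - ψ τ z) :=
  let ⟨P, hP⟩ := hφ
  let ⟨Q, hQ⟩ := hψ
  ⟨P - Q, fun τ hτ z => by simp only [hP τ hτ z, hQ τ hτ z, map_sub]⟩

theorem MemR.mul {φ ψ : ℂ → (Fin 8 → ℂ) → ℂ} (hφ : MemR φ) (hψ : MemR ψ) :
    MemR (fun τ z => φ τ z * ψ τ z) :=
  let ⟨P, hP⟩ := hφ
  let ⟨Q, hQ⟩ := hψ
  ⟨P * Q, fun τ hτ z => by simp only [hP τ hτ z, hQ τ hτ z, map_mul]⟩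

theorem MemR.pow {φ : ℂ → (Fin 8 → ℂ) → ℂ} (hφ : MemR φ) (n : ℕ) :
    MemR (fun τ z => φ τ z ^ n) :=
  let ⟨P, hP⟩ := hφ
  ⟨P ^ n, fun τ hτ z => by simp only [hP τ hτ z, map_pow]⟩

theorem memR_abGens (i : Fin 11) : MemR (fun τ z => abGens i τ z) :=
  ⟨MvPolynomial.X i, fun _ _ _ => by simp⟩

theorem memR_aSW_zero : MemR (fun τ z => aSW 0 τ z) := memR_abGens 0

theorem memR_aSW_two : MemR (fun τ z => aSW 2 τ z) := memR_abGens 1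

theorem memR_aSW_three : MemR (fun τ z => aSW 3 τ z) := memR_abGens 2

theorem memR_aSW_four : MemR (fun τ z => aSW 4 τ z) := memR_abGens 3

theorem memR_bSW_zero : MemR (fun τ z => bSW 0 τ z) := memR_abGens 4

theorem memR_bSW_one : MemR (fun τ z => bSW 1 τ z) := memR_abGens 5

theorem memR_bSW_two : MemR (fun τ z => bSW 2 τ z) := memR_abGens 6

theorem memR_bSW_three : MemR (fun τ z => bSW 3 τ z) := memR_abGens 7

theorem memR_bSW_four : MemR (fun τ z => bSW 4 τ z) := memR_abGens 8

theorem memR_bSW_five : MemR (fun τ z => bSW 5 τ z) := memR_abGens 9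

theorem memR_bSW_six : MemR (fun τ z => bSW 6 τ z) := memR_abGens 10

theorem E4_eq_aSW (τ : ℂ) (z : Fin 8 → ℂ) : E4 τ = 12 * aSW 0 τ z := by
  simp only [aSW, a0f]; ring

theorem E6_eq_bSW (τ : ℂ) (z : Fin 8 → ℂ) : E6 τ = 216 * bSW 0 τ z := by
  simp only [bSW, b0f]; ring

theorem Dl_eq_aSW_bSW (τ : ℂ) (z : Fin 8 → ℂ) :
    Dl τ = aSW 0 τ z ^ 3 - 27 * bSW 0 τ z ^ 2 := by
  simp only [Dl, aSW, bSW, a0f, b0f]; ring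

theorem memR_Dl : MemR (fun τ _ => Dl τ) :=
  ((memR_aSW_zero.pow 3).sub ((MemR.const 27).mul (memR_bSW_zero.pow 2))).congr
    fun τ _ z => Dl_eq_aSW_bSW τ z

theorem GoodTau.aSW_zero_ne {τ : ℂ} (hτ : GoodTau τ) (z : Fin 8 → ℂ) : aSW 0 τ z ≠ 0 := by
  intro h
  exact hτ.2.1 (by rw [E4_eq_aSW τ z, h, mul_zero])

theorem GoodTau.disc_ne {τ : ℂ} (hτ : GoodTau τ) (z : Fin 8 → ℂ) :
    aSW 0 τ z ^ 3 - 27 * bSW 0 τ z ^ 2 ≠ 0 :=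
  Dl_eq_aSW_bSW τ z ▸ hτ.2.2.2

theorem aSW_three_mul {τ : ℂ} (hτ : GoodTau τ) (z : Fin 8 → ℂ) :
    9 * E4 τ ^ 2 * Dl τ ^ 2 * aSW 3 τ z =
    -7 * E4 τ ^ 2 * E6 τ * A3 τ z - 20 * E4 τ ^ 3 * B3 τ z
      - 9 * E4 τ * E6 τ * A1 τ z * A2 τ z + 30 * E4 τ ^ 2 * A1 τ z * B2 τ z
      + 6 * E6 τ * A1 τ z ^ 3 := by
  have hE := hτ.2.1
  have hD := hτ.2.2.2
  have h : aSW 3 τ z = a3f τ z := rfl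
  rw [h, a3f, ← mul_assoc, mul_one_div_cancel (by simp [hE, hD]), one_mul]

theorem bSW_three_mul {τ : ℂ} (hτ : GoodTau τ) (z : Fin 8 → ℂ) :
    108 * E4 τ ^ 3 * Dl τ ^ 2 * bSW 3 τ z =
    -7 * E4 τ ^ 5 * A3 τ z - 20 * E4 τ ^ 3 * E6 τ * B3 τ z
      - 9 * E4 τ ^ 4 * A1 τ z * A2 τ z + 30 * E4 τ ^ 2 * E6 τ * A1 τ z * B2 τ z
      + (16 * E4 τ ^ 3 - 10 * E6 τ ^ 2) * A1 τ z ^ 3 := by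
  have hE := hτ.2.1
  have hD := hτ.2.2.2
  have h : bSW 3 τ z = b3f τ z := rfl
  rw [h, b3f, ← mul_assoc, mul_one_div_cancel (by simp [hE, hD]), one_mul]

theorem aSW_four_mul {τ : ℂ} (hτ : GoodTau τ) (z : Fin 8 → ℂ) :
    288 * E4 τ ^ 3 * Dl τ ^ 3 * aSW 4 τ z =
    576 * E4 τ ^ 3 * Dl τ * A4 τ z + 32256 * E4 τ ^ 2 * Dl τ * A1 τ z * A3 τ z
      - 9 * E4 τ ^ 5 * A2 τ z ^ 2 - 30 * E4 τ ^ 3 * E6 τ * A2 τ z * B2 τ z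
      - 25 * E4 τ ^ 4 * B2 τ z ^ 2
      + (60 * E4 τ ^ 4 - 12 * E4 τ * E6 τ ^ 2) * A1 τ z ^ 2 * A2 τ z
      + 80 * E4 τ ^ 2 * E6 τ * A1 τ z ^ 2 * B2 τ z
      + (-70 * E4 τ ^ 3 + 6 * E6 τ ^ 2) * A1 τ z ^ 4 := by
  have hE := hτ.2.1
  have hD := hτ.2.2.2
  have h : aSW 4 τ z = a4f τ z := rfl
  rw [h, a4f, ← mul_assoc, mul_one_div_cancel (by simp [hE, hD]), one_mul]

theorem bSW_four_mul {τ : ℂ} (hτ : GoodTau τ) (z : Fin 8 → ℂ) :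
    1728 * E4 τ ^ 4 * Dl τ ^ 3 * bSW 4 τ z =
    -8640 * E4 τ ^ 4 * Dl τ * B4 τ z + 138240 * E4 τ ^ 3 * Dl τ * A1 τ z * B3 τ z
      + 9 * E4 τ ^ 5 * E6 τ * A2 τ z ^ 2 + 30 * E4 τ ^ 6 * A2 τ z * B2 τ z
      + 25 * E4 τ ^ 4 * E6 τ * B2 τ z ^ 2
      - 48 * E4 τ ^ 4 * E6 τ * A1 τ z ^ 2 * A2 τ z
      + (-140 * E4 τ ^ 5 + 60 * E4 τ ^ 2 * E6 τ ^ 2) * A1 τ z ^ 2 * B2 τ z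
      + (74 * E4 τ ^ 3 * E6 τ - 10 * E6 τ ^ 3) * A1 τ z ^ 4 := by
  have hE := hτ.2.1
  have hD := hτ.2.2.2
  have h : bSW 4 τ z = b4f τ z := rfl
  rw [h, b4f, ← mul_assoc, mul_one_div_cancel (by simp [hE, hD]), one_mul]

theorem bSW_five_mul {τ : ℂ} (hτ : GoodTau τ) (z : Fin 8 → ℂ) :
    72 * E4 τ ^ 5 * Dl τ ^ 3 * bSW 5 τ z =
    -36288 * E4 τ ^ 4 * Dl τ * A5 τ z - 294 * E4 τ ^ 6 * A2 τ z * A3 τ z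
      - 770 * E4 τ ^ 4 * E6 τ * B2 τ z * A3 τ z - 840 * E4 τ ^ 4 * E6 τ * A2 τ z * B3 τ z
      - 2200 * E4 τ ^ 5 * B2 τ z * B3 τ z + 168 * E4 τ ^ 5 * A1 τ z ^ 2 * A3 τ z
      + 480 * E4 τ ^ 3 * E6 τ * A1 τ z ^ 2 * B3 τ z - 621 * E4 τ ^ 5 * A1 τ z * A2 τ z ^ 2
      + 3525 * E4 τ ^ 4 * A1 τ z * B2 τ z ^ 2 + 1224 * E4 τ ^ 4 * A1 τ z ^ 3 * A2 τ z
      - 240 * E4 τ ^ 2 * E6 τ * A1 τ z ^ 3 * B2 τ z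
      + (-456 * E4 τ ^ 3 + 24 * E6 τ ^ 2) * A1 τ z ^ 5 := by
  have hE := hτ.2.1
  have hD := hτ.2.2.2
  have h : bSW 5 τ z = b5f τ z := rfl
  rw [h, b5f, ← mul_assoc, mul_one_div_cancel (by simp [hE, hD]), one_mul]

theorem bSW_six_mul {τ : ℂ} (hτ : GoodTau τ) (z : Fin 8 → ℂ) :
    4478976 * E4 τ ^ 6 * Dl τ ^ 5 * bSW 6 τ z =
    -19906560 * E4 τ ^ 6 * Dl τ ^ 2 * B6 τ z
      - 188116992 * E4 τ ^ 4 * E6 τ * Dl τ ^ 2 * A1 τ z * A5 τ z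
      - 5184 * E4 τ ^ 7 * E6 τ * Dl τ * A2 τ z * A4 τ z
      - 8640 * E4 τ ^ 8 * Dl τ * B2 τ z * A4 τ z
      - 103680 * E4 τ ^ 8 * Dl τ * A2 τ z * B4 τ z
      - 172800 * E4 τ ^ 6 * E6 τ * Dl τ * B2 τ z * B4 τ z
      + 12672 * E4 τ ^ 6 * E6 τ * Dl τ * A1 τ z ^ 2 * A4 τ z
      + 17280 * (5 * E4 τ ^ 7 + 9 * E4 τ ^ 4 * E6 τ ^ 2) * Dl τ * A1 τ z ^ 2 * B4 τ z
      + 112896 * E4 τ ^ 7 * E6 τ * Dl τ * A3 τ z ^ 2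
      + 645120 * E4 τ ^ 8 * Dl τ * A3 τ z * B3 τ z
      + 921600 * E4 τ ^ 6 * E6 τ * Dl τ * B3 τ z ^ 2
      - 1717632 * E4 τ ^ 6 * E6 τ * Dl τ * A1 τ z * A2 τ z * A3 τ z
      - 362880 * (4 * E4 τ ^ 7 + 11 * E4 τ ^ 4 * E6 τ ^ 2) * Dl τ * A1 τ z * B2 τ z * A3 τ z
      + 483840 * (4 * E4 τ ^ 7 - 9 * E4 τ ^ 4 * E6 τ ^ 2) * Dl τ * A1 τ z * A2 τ z * B3 τ z
      - 11404800 * E4 τ ^ 5 * E6 τ * Dl τ * A1 τ z * B2 τ z * B3 τ z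
      + 1161216 * E4 τ ^ 5 * E6 τ * Dl τ * A1 τ z ^ 3 * A3 τ z
      - 92160 * (37 * E4 τ ^ 6 - 9 * E4 τ ^ 3 * E6 τ ^ 2) * Dl τ * A1 τ z ^ 3 * B3 τ z
      + (135 * E4 τ ^ 9 * E6 τ + 54 * E4 τ ^ 6 * E6 τ ^ 3) * A2 τ z ^ 3
      + (405 * E4 τ ^ 10 + 540 * E4 τ ^ 7 * E6 τ ^ 2) * A2 τ z ^ 2 * B2 τ z
      + 1575 * E4 τ ^ 8 * E6 τ * A2 τ z * B2 τ z ^ 2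
      + (375 * E4 τ ^ 9 + 500 * E4 τ ^ 6 * E6 τ ^ 2) * B2 τ z ^ 3
      + (-3159 * E4 τ ^ 8 * E6 τ + 1701 * E4 τ ^ 5 * E6 τ ^ 3) * A1 τ z ^ 2 * A2 τ z ^ 2
      + (-3060 * E4 τ ^ 9 - 1800 * E4 τ ^ 6 * E6 τ ^ 2) * A1 τ z ^ 2 * A2 τ z * B2 τ z
      + (6975 * E4 τ ^ 7 * E6 τ - 11025 * E4 τ ^ 4 * E6 τ ^ 3) * A1 τ z ^ 2 * B2 τ z ^ 2
      + (6768 * E4 τ ^ 7 * E6 τ - 3024 * E4 τ ^ 4 * E6 τ ^ 3) * A1 τ z ^ 4 * A2 τ z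
      + (4260 * E4 τ ^ 8 + 1800 * E4 τ ^ 5 * E6 τ ^ 2 + 180 * E4 τ ^ 2 * E6 τ ^ 4) * A1 τ z ^ 4 * B2 τ z
      + (-3692 * E4 τ ^ 6 * E6 τ + 504 * E4 τ ^ 3 * E6 τ ^ 3 - 12 * E6 τ ^ 5) * A1 τ z ^ 6 := by
  have hE := hτ.2.1
  have hD := hτ.2.2.2
  have h : bSW 6 τ z = b6f τ z := rfl
  rw [h, b6f, ← mul_assoc, mul_one_div_cancel (by simp [hE, hD]), one_mul]

theorem A1_eq {τ : ℂ} (hτ : GoodTau τ) (z : Fin 8 → ℂ) :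
    A1 τ z = -3 * aSW 0 τ z * bSW 1 τ z := by
  have hE := hτ.2.1
  simp only [aSW, bSW, a0f, b1f]
  field_simp
  ring

theorem A2_eq {τ : ℂ} (hτ : GoodTau τ) (z : Fin 8 → ℂ) :
    A2 τ z =
      3 / 4 * aSW 0 τ z * bSW 1 τ z ^ 2 - 1 / 6 * Dl τ * aSW 2 τ z := by
  have hE := hτ.2.1
  have hD := hτ.2.2.2
  simp only [aSW, bSW, a0f, b1f, a2f]
  field_simp
  ring

theorem B2_eq {τ : ℂ} (hτ : GoodTau τ) (z : Fin 8 → ℂ) :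
    B2 τ z =
      6 / 5 * Dl τ * bSW 2 τ z + 27 / 2 * bSW 0 τ z * bSW 1 τ z ^ 2 := by
  have hE := hτ.2.1
  have hD := hτ.2.2.2
  simp only [bSW, b0f, b1f, b2f]
  field_simp
  ring

theorem A3_eq {τ : ℂ} (hτ : GoodTau τ) (z : Fin 8 → ℂ) :
    A3 τ z =
      9 / 56 * Dl τ * bSW 0 τ z * aSW 3 τ z - 3 / 28 * aSW 0 τ z * Dl τ * bSW 3 τ z
        - 3 / 16 * aSW 0 τ z * bSW 1 τ z ^ 3 - 3 / 56 * Dl τ * aSW 2 τ z * bSW 1 τ z := by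
  have ha := hτ.aSW_zero_ne z
  have hd := hτ.disc_ne z
  have h := aSW_three_mul hτ z
  have h' := bSW_three_mul hτ z
  simp only [E4_eq_aSW τ z, E6_eq_bSW τ z, Dl_eq_aSW_bSW τ z,
    A1_eq hτ z, A2_eq hτ z, B2_eq hτ z] at h h'
  rw [Dl_eq_aSW_bSW τ z]
  have hc : 7 * 1728 * (12 * aSW 0 τ z) ^ 2 * (aSW 0 τ z ^ 3 - 27 * bSW 0 τ z ^ 2) ≠ 0 := by
    simp [ha, hd]
  refine mul_left_cancel₀ hc ?_
  linear_combination h' - 216 * bSW 0 τ z * h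

theorem B3_eq {τ : ℂ} (hτ : GoodTau τ) (z : Fin 8 → ℂ) :
    B3 τ z =
      27 / 40 * Dl τ * bSW 0 τ z * bSW 3 τ z - 3 / 80 * aSW 0 τ z ^ 2 * Dl τ * aSW 3 τ z
        - 9 / 20 * Dl τ * bSW 1 τ z * bSW 2 τ z - 27 / 8 * bSW 0 τ z * bSW 1 τ z ^ 3 := by
  have ha := hτ.aSW_zero_ne z
  have hd := hτ.disc_ne z
  have h := aSW_three_mul hτ z
  have h' := bSW_three_mul hτ z
  simp only [E4_eq_aSW τ z, E6_eq_bSW τ z, Dl_eq_aSW_bSW τ z,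
    A1_eq hτ z, A2_eq hτ z, B2_eq hτ z] at h h'
  rw [Dl_eq_aSW_bSW τ z]
  have hc : 20 * 1728 * (12 * aSW 0 τ z) ^ 3 * (aSW 0 τ z ^ 3 - 27 * bSW 0 τ z ^ 2) ≠ 0 := by
    simp [ha, hd]
  refine mul_left_cancel₀ hc ?_
  linear_combination (12 * aSW 0 τ z) ^ 3 * h - 216 * bSW 0 τ z * h'

theorem A4_eq {τ : ℂ} (hτ : GoodTau τ) (z : Fin 8 → ℂ) :
    A4 τ z =
      1 / 16 * aSW 0 τ z ^ 2 * Dl τ * aSW 2 τ z ^ 2 + 3 / 4 * aSW 0 τ z * Dl τ * bSW 2 τ z ^ 2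
        + 3 / 64 * aSW 0 τ z * bSW 1 τ z ^ 4 + 1 / 2 * Dl τ ^ 2 * aSW 4 τ z
        + 9 / 4 * Dl τ * bSW 0 τ z * aSW 3 τ z * bSW 1 τ z
        + 9 / 16 * Dl τ * aSW 2 τ z * bSW 1 τ z ^ 2
        - 3 / 2 * aSW 0 τ z * Dl τ * bSW 1 τ z * bSW 3 τ z
        - 9 / 4 * Dl τ * bSW 0 τ z * aSW 2 τ z * bSW 2 τ z := by
  have ha := hτ.aSW_zero_ne z
  have hd := hτ.disc_ne z
  have h := aSW_four_mul hτ z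
  simp only [E4_eq_aSW τ z, E6_eq_bSW τ z, Dl_eq_aSW_bSW τ z,
    A1_eq hτ z, A2_eq hτ z, B2_eq hτ z, A3_eq hτ z] at h
  rw [Dl_eq_aSW_bSW τ z]
  have hc : 576 * (12 * aSW 0 τ z) ^ 3 * (aSW 0 τ z ^ 3 - 27 * bSW 0 τ z ^ 2) ≠ 0 := by
    simp [ha, hd]
  refine mul_left_cancel₀ hc ?_
  linear_combination -h

theorem B4_eq {τ : ℂ} (hτ : GoodTau τ) (z : Fin 8 → ℂ) :
    B4 τ z =
      3 / 20 * aSW 0 τ z ^ 2 * Dl τ * aSW 3 τ z * bSW 1 τ z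
        + 3 / 40 * aSW 0 τ z * Dl τ * bSW 0 τ z * aSW 2 τ z ^ 2
        + 9 / 10 * Dl τ * bSW 0 τ z * bSW 2 τ z ^ 2 + 3 / 20 * Dl τ * bSW 1 τ z ^ 2 * bSW 2 τ z
        + 27 / 32 * bSW 0 τ z * bSW 1 τ z ^ 4
        - 1 / 10 * aSW 0 τ z ^ 2 * Dl τ * aSW 2 τ z * bSW 2 τ z - 1 / 5 * Dl τ ^ 2 * bSW 4 τ z
        - 27 / 10 * Dl τ * bSW 0 τ z * bSW 1 τ z * bSW 3 τ z := by
  have ha := hτ.aSW_zero_ne z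
  have hd := hτ.disc_ne z
  have h := bSW_four_mul hτ z
  simp only [E4_eq_aSW τ z, E6_eq_bSW τ z, Dl_eq_aSW_bSW τ z,
    A1_eq hτ z, A2_eq hτ z, B2_eq hτ z, B3_eq hτ z] at h
  rw [Dl_eq_aSW_bSW τ z]
  have hc : 8640 * (12 * aSW 0 τ z) ^ 4 * (aSW 0 τ z ^ 3 - 27 * bSW 0 τ z ^ 2) ≠ 0 := by
    simp [ha, hd]
  refine mul_left_cancel₀ hc ?_
  linear_combination h

theorem A5_eq {τ : ℂ} (hτ : GoodTau τ) (z : Fin 8 → ℂ) :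
    A5 τ z =
      3 / 448 * aSW 0 τ z ^ 2 * Dl τ * aSW 2 τ z ^ 2 * bSW 1 τ z
        + 9 / 224 * aSW 0 τ z * Dl τ * bSW 1 τ z ^ 2 * bSW 3 τ z
        + 11 / 336 * Dl τ ^ 2 * aSW 3 τ z * bSW 2 τ z
        + 165 / 448 * Dl τ * bSW 0 τ z * aSW 3 τ z * bSW 1 τ z ^ 2
        - 1 / 42 * aSW 0 τ z * Dl τ ^ 2 * bSW 5 τ z
        - 3 / 112 * aSW 0 τ z * Dl τ * bSW 1 τ z * bSW 2 τ z ^ 2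
        - 3 / 256 * aSW 0 τ z * bSW 1 τ z ^ 5 - 1 / 48 * Dl τ ^ 2 * aSW 2 τ z * bSW 3 τ z
        - 9 / 112 * Dl τ * bSW 0 τ z * aSW 2 τ z * bSW 1 τ z * bSW 2 τ z
        - 25 / 1344 * Dl τ * aSW 2 τ z * bSW 1 τ z ^ 3 := by
  have ha := hτ.aSW_zero_ne z
  have hd := hτ.disc_ne z
  have h := bSW_five_mul hτ z
  simp only [E4_eq_aSW τ z, E6_eq_bSW τ z, Dl_eq_aSW_bSW τ z,
    A1_eq hτ z, A2_eq hτ z, B2_eq hτ z, A3_eq hτ z, B3_eq hτ z] at h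
  rw [Dl_eq_aSW_bSW τ z]
  have hc : 36288 * (12 * aSW 0 τ z) ^ 4 * (aSW 0 τ z ^ 3 - 27 * bSW 0 τ z ^ 2) ≠ 0 := by
    simp [ha, hd]
  refine mul_left_cancel₀ hc ?_
  linear_combination h

theorem B6_eq {τ : ℂ} (hτ : GoodTau τ) (z : Fin 8 → ℂ) :
    B6 τ z =
      3 / 80 * aSW 0 τ z ^ 3 * Dl τ * bSW 1 τ z ^ 2 * bSW 4 τ z
        + 3 / 160 * aSW 0 τ z ^ 2 * Dl τ ^ 2 * aSW 3 τ z * bSW 3 τ z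
        + 3 / 160 * aSW 0 τ z ^ 2 * Dl τ * aSW 2 τ z * bSW 1 τ z ^ 2 * bSW 2 τ z
        + 9 / 160 * aSW 0 τ z * Dl τ ^ 2 * bSW 0 τ z * aSW 2 τ z * aSW 4 τ z
        + 1 / 160 * aSW 0 τ z * Dl τ ^ 2 * aSW 2 τ z * aSW 3 τ z * bSW 1 τ z
        + 3 / 640 * Dl τ ^ 2 * bSW 0 τ z * aSW 2 τ z ^ 3
        + 9 / 20 * Dl τ ^ 2 * bSW 0 τ z * bSW 2 τ z * bSW 4 τ z
        + 9 / 640 * Dl τ * bSW 1 τ z ^ 4 * bSW 2 τ z + 27 / 512 * bSW 0 τ z * bSW 1 τ z ^ 6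
        - 1 / 40 * aSW 0 τ z ^ 2 * Dl τ ^ 2 * aSW 2 τ z * bSW 4 τ z
        - 3 / 80 * aSW 0 τ z ^ 2 * Dl τ ^ 2 * aSW 4 τ z * bSW 2 τ z
        - 9 / 160 * aSW 0 τ z ^ 2 * Dl τ * bSW 0 τ z * aSW 4 τ z * bSW 1 τ z ^ 2
        - 9 / 160 * aSW 0 τ z ^ 2 * Dl τ * aSW 3 τ z * bSW 1 τ z ^ 3
        - 9 / 640 * aSW 0 τ z * Dl τ ^ 2 * bSW 0 τ z * aSW 3 τ z ^ 2
        - 1 / 320 * aSW 0 τ z * Dl τ ^ 2 * aSW 2 τ z ^ 2 * bSW 2 τ z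
        - 27 / 640 * aSW 0 τ z * Dl τ * bSW 0 τ z * aSW 2 τ z ^ 2 * bSW 1 τ z ^ 2
        - 9 / 40 * Dl τ ^ 3 * bSW 6 τ z - 81 / 80 * Dl τ ^ 2 * bSW 0 τ z * bSW 1 τ z * bSW 5 τ z
        - 27 / 160 * Dl τ ^ 2 * bSW 0 τ z * bSW 3 τ z ^ 2
        - 3 / 160 * Dl τ ^ 2 * bSW 1 τ z ^ 2 * bSW 4 τ z
        - 27 / 320 * Dl τ * bSW 0 τ z * bSW 1 τ z ^ 3 * bSW 3 τ z := by
  have ha := hτ.aSW_zero_ne z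
  have hd := hτ.disc_ne z
  have h := bSW_six_mul hτ z
  simp only [E4_eq_aSW τ z, E6_eq_bSW τ z, Dl_eq_aSW_bSW τ z,
    A1_eq hτ z, A2_eq hτ z, B2_eq hτ z, A3_eq hτ z, B3_eq hτ z, A4_eq hτ z, B4_eq hτ z, A5_eq hτ z] at h
  rw [Dl_eq_aSW_bSW τ z]
  have hc : 19906560 * (12 * aSW 0 τ z) ^ 6 * (aSW 0 τ z ^ 3 - 27 * bSW 0 τ z ^ 2) ^ 2 ≠ 0 := by
    simp [ha, hd]
  refine mul_left_cancel₀ hc ?_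
  linear_combination h

set_option maxHeartbeats 1000000 in
theorem memR_nineForms (i : Fin 9) : MemR (nineForms i) := by
  fin_cases i
  on_goal 1 => refine MemR.congr ?_ fun _ hτ z => A1_eq hτ z
  on_goal 2 => refine MemR.congr ?_ fun _ hτ z => A2_eq hτ z
  on_goal 3 => refine MemR.congr ?_ fun _ hτ z => A3_eq hτ z
  on_goal 4 => refine MemR.congr ?_ fun _ hτ z => A4_eq hτ z
  on_goal 5 => refine MemR.congr ?_ fun _ hτ z => A5_eq hτ z
  on_goal 6 => refine MemR.congr ?_ fun _ hτ z => B2_eq hτ z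
  on_goal 7 => refine MemR.congr ?_ fun _ hτ z => B3_eq hτ z
  on_goal 8 => refine MemR.congr ?_ fun _ hτ z => B4_eq hτ z
  on_goal 9 => refine MemR.congr ?_ fun _ hτ z => B6_eq hτ z
  all_goals with_reducible repeat' first | apply MemR.add | apply MemR.sub
  all_goals
    with_reducible apply_rules [MemR.const, memR_Dl, memR_aSW_zero, memR_aSW_two, memR_aSW_three,
      memR_aSW_four, memR_bSW_zero, memR_bSW_one, memR_bSW_two, memR_bSW_three, memR_bSW_four,
      memR_bSW_five, memR_bSW_six, MemR.pow, MemR.mul]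

/-- The nine basic holomorphic Jacobi forms are polynomials in
a_0, a_2, a_3, a_4, b_0, …, b_6; explicitly A_1 = −3a_0b_1,
A_2 = (9a_0b_1² − 2Δa_2)/12, B_2 = (135b_0b_1² + 12Δb_2)/10 and Δ = a_0³ − 27b_0². -/
theorem nineForms_in_R :
    (∀ i : Fin 9, MemR (nineForms i)) ∧
    (∀ τ : ℂ, GoodTau τ → ∀ z : Fin 8 → ℂ,
      A1 τ z = -3 * aSW 0 τ z * bSW 1 τ z ∧
      A2 τ z = (9 * aSW 0 τ z * bSW 1 τ z ^ 2 - 2 * Dl τ * aSW 2 τ z) / 12 ∧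
      B2 τ z = (135 * bSW 0 τ z * bSW 1 τ z ^ 2 + 12 * Dl τ * bSW 2 τ z) / 10 ∧
      Dl τ = aSW 0 τ z ^ 3 - 27 * bSW 0 τ z ^ 2) := by
  refine ⟨memR_nineForms, fun τ hτ z => ⟨A1_eq hτ z, ?_, ?_, Dl_eq_aSW_bSW τ z⟩⟩
  · rw [A2_eq hτ z]
    ring
  · rw [B2_eq hτ z]
    ring

end E8Jacobi
end
end

section
/- If φ is a W(E8)-invariant weak Jacobi form of weight k ∈ ℤ and index m ∈ ℤ≥0 and φ is not identically zero, then k ≥ −4m. -/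
noncomputable section

open Complex Finset

namespace E8Jacobi

section WeakJacobiForms

open Filter Topology Asymptotics

variable {k : ℤ} {m : ℕ} {φ : ℂ → (Fin 8 → ℂ) → ℂ}

/-- Schwarz lemma for a function vanishing to order `d` at the centre of a disc. -/
theorem exists_eq_pow_mul_of_isBigO {R M : ℝ} (hR : 0 < R) {h : ℂ → ℂ}
    (hd : DifferentiableOn ℂ h (Metric.ball 0 R)) (hM : ∀ x ∈ Metric.ball (0 : ℂ) R, ‖h x‖ ≤ M)
    (d : ℕ) (hO : h =O[𝓝[≠] 0] fun x => x ^ d) :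
    ∃ g : ℂ → ℂ, DifferentiableOn ℂ g (Metric.ball 0 R) ∧
      ∀ x ∈ Metric.ball (0 : ℂ) R, h x = x ^ d * g x ∧ ‖g x‖ ≤ M / R ^ d := by
  induction d with
  | zero => exact ⟨h, hd, fun x hx => by simpa using hM x hx⟩
  | succ d ih =>
    have h0 : (fun x : ℂ => x ^ (d + 1)) =O[𝓝[≠] 0] fun x => x ^ d := by
      refine IsBigO.of_bound 1 ?_
      have : ∀ᶠ x : ℂ in 𝓝[≠] 0, ‖x‖ < 1 := by
        refine nhdsWithin_le_nhds ?_
        have := Metric.ball_mem_nhds (0 : ℂ) one_pos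
        filter_upwards [this] with x hx using by simpa using hx
      filter_upwards [this] with x hx
      rw [pow_succ, norm_mul]
      have := norm_nonneg (x ^ d)
      nlinarith
    obtain ⟨g, hg, hgx⟩ := ih (hO.trans h0)
    have hball : Metric.ball (0 : ℂ) R ∈ 𝓝 (0 : ℂ) := Metric.ball_mem_nhds 0 hR
    have hg0 : g 0 = 0 := by
      have hgO : g =O[𝓝[≠] 0] fun x => x := by
        obtain ⟨c, hc⟩ := hO.bound
        refine IsBigO.of_bound c ?_
        filter_upwards [hc, nhdsWithin_le_nhds hball, self_mem_nhdsWithin] with x hx hxb hx0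
        rw [(hgx x hxb).1, pow_succ, norm_mul, norm_mul] at hx
        have : 0 < ‖x ^ d‖ := norm_pos_iff.2 (pow_ne_zero _ hx0)
        have h2 : ‖x ^ d‖ * ‖g x‖ ≤ ‖x ^ d‖ * (c * ‖x‖) := by linarith
        exact le_of_mul_le_mul_left h2 this
      have t1 : Tendsto g (𝓝[≠] 0) (𝓝 0) := hgO.trans_tendsto
        ((continuous_id.tendsto' (0 : ℂ) 0 rfl).mono_left nhdsWithin_le_nhds)
      have t2 : Tendsto g (𝓝[≠] 0) (𝓝 (g 0)) :=
        ((hg.differentiableAt hball).continuousAt.tendsto).mono_left nhdsWithin_le_nhds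
      exact tendsto_nhds_unique t2 t1
    refine ⟨dslope g 0, (Complex.differentiableOn_dslope hball).2 hg, fun x hx => ⟨?_, ?_⟩⟩
    · have := sub_smul_dslope g 0 x
      rw [hg0] at this
      simp only [sub_zero, smul_eq_mul] at this
      rw [(hgx x hx).1, ← this]; ring
    · have hmap : Set.MapsTo g (Metric.ball 0 R) (Metric.closedBall (g 0) (M / R ^ d)) := by
        intro y hy
        rw [hg0, mem_closedBall_zero_iff]
        exact (hgx y hy).2
      have := Complex.norm_dslope_le_div_of_mapsTo_ball hg hmap hx
      rw [pow_succ, ← div_div]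
      exact this

theorem norm_le_of_isBigO_pow {R M : ℝ} (hR : 0 < R) {h : ℂ → ℂ}
    (hd : DifferentiableOn ℂ h (Metric.ball 0 R)) (hM : ∀ x ∈ Metric.ball (0 : ℂ) R, ‖h x‖ ≤ M)
    (d : ℕ) (hO : h =O[𝓝[≠] 0] fun x => x ^ d) {x : ℂ} (hx : ‖x‖ < R) :
    ‖h x‖ ≤ M / R ^ d * ‖x‖ ^ d := by
  obtain ⟨g, -, hg⟩ := exists_eq_pow_mul_of_isBigO hR hd hM d hO
  obtain ⟨h1, h2⟩ := hg x (by simpa using hx)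
  rw [h1, norm_mul, norm_pow, mul_comm]
  gcongr

/-- The quotient by `x ^ d` of a function vanishing to order `d` tends to a limit at a controlled
rate. -/
theorem exists_tendsto_div_pow {R M : ℝ} (hR : 0 < R) {h : ℂ → ℂ}
    (hd : DifferentiableOn ℂ h (Metric.ball 0 R)) (hM : ∀ x ∈ Metric.ball (0 : ℂ) R, ‖h x‖ ≤ M)
    (d : ℕ) (hO : h =O[𝓝[≠] 0] fun x => x ^ d) :
    ∃ l : ℂ, Tendsto (fun x => h x / x ^ d) (𝓝[≠] 0) (𝓝 l) ∧ ‖l‖ ≤ M / R ^ d ∧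
      ∀ x : ℂ, x ≠ 0 → ‖x‖ < R → ‖h x / x ^ d - l‖ ≤ 2 * (M / R ^ d) / R * ‖x‖ := by
  obtain ⟨g, hgd, hg⟩ := exists_eq_pow_mul_of_isBigO hR hd hM d hO
  have hball : Metric.ball (0 : ℂ) R ∈ 𝓝 (0 : ℂ) := Metric.ball_mem_nhds 0 hR
  have hq : ∀ x : ℂ, x ≠ 0 → ‖x‖ < R → h x / x ^ d = g x := by
    intro x hx0 hx
    rw [(hg x (by simpa using hx)).1, mul_div_cancel_left₀ _ (pow_ne_zero _ hx0)]
  refine ⟨g 0, ?_, (hg 0 (by simpa using hR)).2, ?_⟩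
  · refine Tendsto.congr' ?_
      (((hgd.differentiableAt hball).continuousAt.tendsto).mono_left nhdsWithin_le_nhds)
    filter_upwards [nhdsWithin_le_nhds hball, self_mem_nhdsWithin] with x hx hx0
    exact (hq x hx0 (by simpa using hx)).symm
  · intro x hx0 hx
    rw [hq x hx0 hx]
    have hmap : Set.MapsTo g (Metric.ball 0 R) (Metric.closedBall (g 0) (2 * (M / R ^ d))) := by
      intro y hy
      rw [mem_closedBall_iff_norm]
      calc ‖g y - g 0‖ ≤ ‖g y‖ + ‖g 0‖ := norm_sub_le _ _
        _ ≤ _ := by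
          have h1 := (hg y hy).2
          have h2 := (hg 0 (by simpa using hR)).2
          linarith
    have hxR : x ∈ Metric.ball (0 : ℂ) R := by simpa using hx
    have h1 := Complex.norm_dslope_le_div_of_mapsTo_ball hgd hmap hxR
    rw [dslope_of_ne _ hx0, slope_def_field, norm_div, sub_zero,
      div_le_iff₀ (norm_pos_iff.2 hx0)] at h1
    exact h1

/-- A bounded function holomorphic off a finite set extends over that set. -/
theorem exists_extension_of_finite {U : Set ℂ} (hU : IsOpen U) (S : Finset ℂ) {M : ℝ} :
    ∀ f : ℂ → ℂ, DifferentiableOn ℂ f (U \ S) → (∀ x ∈ U \ (S : Set ℂ), ‖f x‖ ≤ M) →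
    ∃ g : ℂ → ℂ, DifferentiableOn ℂ g U ∧ (∀ x ∈ U, ‖g x‖ ≤ M) ∧
      ∀ x ∉ S, g x = f x := by
  classical
  induction S using Finset.induction_on with
  | empty => intro f hf hM; exact ⟨f, by simpa using hf, by simpa using hM, fun _ _ => rfl⟩
  | insert a S ha ih =>
    intro f hf hM
    by_cases haU : a ∈ U
    swap
    · have hset : U \ ((insert a S : Finset ℂ) : Set ℂ) = U \ (S : Set ℂ) := by
        ext x
        simp only [Finset.coe_insert, Set.mem_sdiff, Set.mem_insert_iff, not_or]
        constructor
        · tauto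
        · rintro ⟨h1, h2⟩
          exact ⟨h1, fun h => haU (h ▸ h1), h2⟩
      rw [hset] at hf hM
      obtain ⟨g, h1, h2, h3⟩ := ih f hf hM
      exact ⟨g, h1, h2, fun x hx => h3 x fun h => hx (Finset.mem_insert_of_mem h)⟩
    set V : Set ℂ := U \ (S : Set ℂ) with hV
    have hVo : IsOpen V := hU.sdiff S.finite_toSet.isClosed
    have haV : a ∈ V := ⟨haU, by simpa using ha⟩
    have hVa : V ∈ 𝓝 a := hVo.mem_nhds haV
    have hset : V \ {a} = U \ ((insert a S : Finset ℂ) : Set ℂ) := by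
      ext x
      simp only [hV, Finset.coe_insert, Set.mem_sdiff, Set.mem_insert_iff, Set.mem_singleton_iff]
      tauto
    have hb : BddAbove (norm ∘ f '' (V \ {a})) := by
      refine ⟨M, ?_⟩
      rintro _ ⟨x, hx, rfl⟩
      exact hM x (hset ▸ hx)
    have hf1 := Complex.differentiableOn_update_limUnder_of_bddAbove hVa (hset ▸ hf) hb
    set f1 := Function.update f a (limUnder (𝓝[≠] a) f) with hf1d
    have hM1 : ∀ x ∈ V, ‖f1 x‖ ≤ M := by
      have hne : ∀ x ∈ V, x ≠ a → ‖f1 x‖ ≤ M := by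
        intro x hx hxa
        rw [hf1d, Function.update_of_ne hxa]
        exact hM x (hset ▸ ⟨hx, hxa⟩)
      intro x hx
      by_cases hxa : x = a
      · subst hxa
        have ht : Tendsto (fun y => ‖f1 y‖) (𝓝[≠] x) (𝓝 ‖f1 x‖) :=
          ((hf1.differentiableAt hVa).continuousAt.norm.tendsto).mono_left nhdsWithin_le_nhds
        refine le_of_tendsto ht ?_
        filter_upwards [nhdsWithin_le_nhds hVa, self_mem_nhdsWithin] with y hy hyx
        exact hne y hy hyx
      · exact hne x hx hxa
    obtain ⟨g, h1, h2, h3⟩ := ih f1 hf1 hM1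
    refine ⟨g, h1, h2, fun x hx => ?_⟩
    rw [Finset.mem_insert, not_or] at hx
    rw [h3 x hx.2, hf1d, Function.update_of_ne hx.1]

/-- Maximum principle on a punctured disc for functions bounded near the puncture. -/
theorem norm_le_of_punctured {ρ r M : ℝ} (hr : r < ρ) {f : ℂ → ℂ}
    (hf : ∀ u : ℂ, u ≠ 0 → ‖u‖ < ρ → DifferentiableAt ℂ f u)
    (hb : ∃ C, ∀ᶠ u in 𝓝[≠] (0 : ℂ), ‖f u‖ ≤ C) (hM : ∀ u : ℂ, ‖u‖ = r → ‖f u‖ ≤ M)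
    {u : ℂ} (hu0 : u ≠ 0) (hu : ‖u‖ ≤ r) : ‖f u‖ ≤ M := by
  have hr0 : 0 < r := (norm_pos_iff.2 hu0).trans_le hu
  have hball : Metric.ball (0 : ℂ) ρ ∈ 𝓝 (0 : ℂ) := Metric.ball_mem_nhds 0 (hr0.trans hr)
  have hd : DifferentiableOn ℂ f (Metric.ball 0 ρ \ {0}) := fun x hx =>
    (hf x hx.2 (by simpa using hx.1)).differentiableWithinAt
  have ho : (fun z => f z - f 0) =o[𝓝[≠] (0 : ℂ)] fun z => (z - 0)⁻¹ := by
    obtain ⟨C, hC⟩ := hb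
    have h1 : (fun z => f z - f 0) =O[𝓝[≠] (0 : ℂ)] fun _ => (1 : ℂ) := by
      refine IsBigO.of_bound (C + ‖f 0‖) ?_
      filter_upwards [hC] with z hz
      simp only [norm_one, mul_one]
      exact (norm_sub_le _ _).trans (by linarith)
    refine h1.trans_isLittleO ?_
    rw [isLittleO_const_left]
    right
    simp only [sub_zero]
    exact tendsto_norm_cobounded_atTop.comp tendsto_inv₀_nhdsNE_zero
  have hg := Complex.differentiableOn_update_limUnder_of_isLittleO hball hd ho
  set g := Function.update f 0 (limUnder (𝓝[≠] 0) f) with hgd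
  have hcl : closure (Metric.ball (0 : ℂ) r) ⊆ Metric.ball 0 ρ := by
    rw [closure_ball _ hr0.ne']
    exact Metric.closedBall_subset_ball hr
  have hgc : DiffContOnCl ℂ g (Metric.ball 0 r) := (hg.mono hcl).diffContOnCl
  have := Complex.norm_le_of_forall_mem_frontier_norm_le Metric.isBounded_ball hgc (C := M)
    (fun z hz => by
      rw [frontier_ball _ hr0.ne', mem_sphere_zero_iff_norm] at hz
      have hz0 : z ≠ 0 := by rintro rfl; simp at hz; linarith
      rw [hgd, Function.update_of_ne hz0]
      exact hM z hz) (z := u) (by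
      rw [closure_ball _ hr0.ne']; simpa using hu)
  rwa [hgd, Function.update_of_ne hu0] at this

/-- A function of several nonzero variables, holomorphic where the product has norm less than one
and bounded as each variable tends to zero, is bounded on punctured polydiscs. -/
theorem exists_bound_punctured_polydisc {ι : Type*} [Fintype ι] [DecidableEq ι]
    {F : (ι → ℂ) → ℂ}
    (hF : ∀ Y : ι → ℂ, (∀ i, Y i ≠ 0) → ‖∏ i, Y i‖ < 1 → DifferentiableAt ℂ F Y)
    (hb : ∀ Y : ι → ℂ, (∀ i, Y i ≠ 0) → ∀ i, ∃ C, ∀ᶠ u in 𝓝[≠] (0 : ℂ),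
      ‖F (Function.update Y i u)‖ ≤ C)
    {r : ι → ℝ} (hr : ∀ i, 0 < r i) (hr1 : ∏ i, r i < 1) :
    ∃ M, 0 ≤ M ∧ ∀ Y : ι → ℂ, (∀ i, Y i ≠ 0) → (∀ i, ‖Y i‖ ≤ r i) → ‖F Y‖ ≤ M := by
  have hK : IsCompact (Set.univ.pi fun i => Metric.sphere (0 : ℂ) (r i)) :=
    isCompact_univ_pi fun i => isCompact_sphere _ _
  have hc : ContinuousOn F (Set.univ.pi fun i => Metric.sphere (0 : ℂ) (r i)) := by
    intro Y hY
    have hY' : ∀ i, ‖Y i‖ = r i := fun i => by simpa using hY i (Set.mem_univ i)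
    refine (hF Y (fun i => ?_) ?_).continuousAt.continuousWithinAt
    · rw [← norm_pos_iff, hY']; exact hr i
    · rw [norm_prod]; simpa [hY'] using hr1
  obtain ⟨M, hM⟩ := hK.exists_bound_of_continuousOn hc
  refine ⟨max M 0, le_max_right _ _, ?_⟩
  have key : ∀ S : Finset ι, ∀ Y : ι → ℂ, (∀ i, Y i ≠ 0) → (∀ i, ‖Y i‖ ≤ r i) →
      (∀ i ∉ S, ‖Y i‖ = r i) → ‖F Y‖ ≤ M := by
    intro S
    induction S using Finset.induction_on with
    | empty =>
      intro Y _ _ h3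
      exact hM Y fun i _ => by simpa using h3 i (by simp)
    | insert a S ha ih =>
      intro Y h1 h2 h3
      have hprod : ∀ u : ℂ, ‖∏ i, Function.update Y a u i‖ ≤
          ‖u‖ * ∏ i ∈ univ.erase a, r i := by
        intro u
        rw [norm_prod, ← Finset.mul_prod_erase _ _ (Finset.mem_univ a), Function.update_self]
        gcongr with i hi
        rw [Function.update_of_ne (Finset.ne_of_mem_erase hi)]
        exact h2 i
      set p := ∏ i ∈ univ.erase a, r i with hp
      have hp0 : 0 < p := Finset.prod_pos fun i _ => hr i
      have hrp : r a * p < 1 := by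
        rw [hp, Finset.mul_prod_erase _ _ (Finset.mem_univ a)]; exact hr1
      have hne : ∀ u : ℂ, u ≠ 0 → ∀ i, Function.update Y a u i ≠ 0 := by
        intro u hu i
        by_cases hi : i = a
        · subst hi; simpa using hu
        · rw [Function.update_of_ne hi]; exact h1 i
      have := norm_le_of_punctured (ρ := 1 / p) (r := r a) (M := M)
        (f := fun u => F (Function.update Y a u)) (by rwa [lt_div_iff₀ hp0])
        (fun u hu hup => by
          have hdF := hF (Function.update Y a u) (hne u hu) ((hprod u).trans_lt (by
            rwa [lt_div_iff₀ hp0] at hup))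
          exact hdF.comp u (differentiableAt_pi.2 fun i => by
            by_cases hi : i = a
            · subst hi; simp
            · simp [Function.update_of_ne hi]))
        (hb Y h1 a)
        (fun u hu => by
          have hu0 : u ≠ 0 := by rw [← norm_pos_iff, hu]; exact hr a
          refine ih _ (hne u hu0) (fun i => ?_) fun i hi => ?_
          · by_cases hi : i = a
            · subst hi; simp [hu]
            · rw [Function.update_of_ne hi]; exact h2 i
          · by_cases hia : i = a
            · subst hia; simp [hu]
            · rw [Function.update_of_ne hia]
              exact h3 i (by simp [hia, hi]))
        (h1 a) (h2 a)
      simpa using this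
  intro Y h1 h2
  exact (key univ Y h1 h2 (fun i hi => absurd (mem_univ i) hi)).trans (le_max_left _ _)

theorem two_pi_I_ne_zero' : 2 * πC * I ≠ 0 := by
  simp [πC]

theorem norm_qExp (τ : ℂ) : ‖qExp τ‖ = Real.exp (-(2 * Real.pi * τ.im)) := by
  simp [qExp, Complex.norm_exp, πC]

theorem qExp_add (x y : ℂ) : qExp (x + y) = qExp x * qExp y := by
  rw [qExp, qExp, qExp, mul_add, Complex.exp_add]

theorem qExp_ne_zero (x : ℂ) : qExp x ≠ 0 := Complex.exp_ne_zero _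

theorem qExp_int (n : ℤ) : qExp n = 1 := by
  rw [qExp, Complex.exp_eq_one_iff]
  exact ⟨n, by simp [πC]; ring⟩

theorem qExp_log {u : ℂ} (hu : u ≠ 0) : qExp (Complex.log u / (2 * πC * I)) = u := by
  rw [qExp, mul_div_cancel₀ _ two_pi_I_ne_zero', Complex.exp_log hu]

theorem log_qExp_exists (y : ℂ) : ∃ n : ℤ, Complex.log (qExp y) / (2 * πC * I) = y + n := by
  obtain ⟨n, hn⟩ := Complex.log_exp_exists (2 * πC * I * y)
  refine ⟨n, ?_⟩
  rw [qExp, div_eq_iff two_pi_I_ne_zero', hn]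
  simp [πC]; ring

theorem differentiable_qExp : Differentiable ℂ qExp := by
  unfold qExp; fun_prop

theorem isOpen_im_pos : IsOpen {τ : ℂ | 0 < τ.im} := isOpen_lt continuous_const continuous_im

theorem isPreconnected_im_pos : IsPreconnected {τ : ℂ | 0 < τ.im} :=
  (convex_halfSpace_im_gt 0).isPreconnected

theorem IsWeakJacobiFormE8.differentiableAt (h : IsWeakJacobiFormE8 k m φ)
    {p : ℂ × (Fin 8 → ℂ)} (hp : 0 < p.1.im) :
    DifferentiableAt ℂ (fun p : ℂ × (Fin 8 → ℂ) => φ p.1 p.2) p :=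
  (h.holo p hp).differentiableAt
    ((isOpen_lt continuous_const (continuous_im.comp continuous_fst)).mem_nhds hp)

/-- Differentiability of a weak Jacobi form along holomorphic families of arguments. -/
theorem IsWeakJacobiFormE8.differentiableAt_comp {E : Type*} [NormedAddCommGroup E]
    [NormedSpace ℂ E] (h : IsWeakJacobiFormE8 k m φ) {f : E → ℂ} {g : E → Fin 8 → ℂ} {x : E}
    (hf : DifferentiableAt ℂ f x) (hg : DifferentiableAt ℂ g x) (hx : 0 < (f x).im) :
    DifferentiableAt ℂ (fun t => φ (f t) (g t)) x :=
  DifferentiableAt.comp (g := fun p : ℂ × (Fin 8 → ℂ) => φ p.1 p.2) x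
    (h.differentiableAt (p := (f x, g x)) hx) (hf.prodMk hg)

/-- For fixed `z`, a weak Jacobi form stays bounded as `τ → i∞`. -/
theorem IsWeakJacobiFormE8.exists_bound_im (h : IsWeakJacobiFormE8 k m φ) (z : Fin 8 → ℂ) :
    ∃ C, ∀ τ : ℂ, 1 ≤ τ.im → ‖φ τ z‖ ≤ C := by
  obtain ⟨co, hco⟩ := h.fourier
  set a : ℕ → ℂ := fun n => ∑' w : E8Lattice, co n w * Complex.exp (2 * πC * I * dotC (cv w.1) z)
    with ha
  have hφ : ∀ τ : ℂ, 0 < τ.im → φ τ z = ∑' n, a n * qExp τ ^ n := by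
    intro τ hτ
    rw [hco τ hτ z]
    exact tsum_congr fun n => tsum_mul_right
  have hmono : ∀ τ τ' : ℂ, τ.im ≤ τ'.im → ‖qExp τ'‖ ≤ ‖qExp τ‖ := by
    intro τ τ' hh
    rw [norm_qExp, norm_qExp]
    gcongr
  by_cases hs : Summable fun n => a n * qExp I ^ n
  · refine ⟨∑' n, ‖a n * qExp I ^ n‖, fun τ hτ => ?_⟩
    have hle : ∀ n, ‖a n * qExp τ ^ n‖ ≤ ‖a n * qExp I ^ n‖ := by
      intro n
      rw [norm_mul, norm_mul, norm_pow, norm_pow]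
      gcongr
      exact hmono I τ (by simpa using hτ)
    rw [hφ τ (by linarith)]
    have hsn : Summable fun n => ‖a n * qExp τ ^ n‖ :=
      Summable.of_nonneg_of_le (fun _ => norm_nonneg _) hle hs.norm
    exact (norm_tsum_le_tsum_norm hsn).trans (hsn.tsum_le_tsum hle hs.norm)
  · have hzero : ∀ τ : ℂ, 0 < τ.im → τ.im < 1 → φ τ z = 0 := by
      intro τ hτ hτ1
      rw [hφ τ hτ]
      refine tsum_eq_zero_of_not_summable fun hsum => hs ?_
      refine Summable.of_norm (Summable.of_nonneg_of_le (fun _ => norm_nonneg _) (fun n => ?_)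
        hsum.norm)
      rw [norm_mul, norm_mul, norm_pow, norm_pow]
      gcongr
      exact hmono τ I (by simpa using hτ1.le)
    have han : AnalyticOnNhd ℂ (fun τ => φ τ z) {τ : ℂ | 0 < τ.im} := by
      refine DifferentiableOn.analyticOnNhd (fun τ hτ => ?_) isOpen_im_pos
      exact (h.differentiableAt_comp differentiableAt_id (differentiableAt_const z)
        hτ).differentiableWithinAt
    have hI : (I / 2 : ℂ).im = 1 / 2 := by simp
    have hev : (fun τ => φ τ z) =ᶠ[𝓝 (I / 2)] 0 := by
      have h1 : {τ : ℂ | 0 < τ.im} ∈ 𝓝 (I / 2 : ℂ) :=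
        isOpen_im_pos.mem_nhds (by simp)
      have h2 : {τ : ℂ | τ.im < 1} ∈ 𝓝 (I / 2 : ℂ) :=
        (isOpen_lt continuous_im continuous_const).mem_nhds (by
          show (I / 2 : ℂ).im < 1
          rw [hI]; norm_num)
      filter_upwards [h1, h2] with τ h1 h2 using hzero τ h1 h2
    have := han.eqOn_zero_of_preconnected_of_eventuallyEq_zero isPreconnected_im_pos
      (by show 0 < (I / 2 : ℂ).im; rw [hI]; norm_num) hev
    refine ⟨0, fun τ hτ => ?_⟩
    have h0 : φ τ z = 0 := this (show 0 < τ.im by linarith)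
    rw [h0, norm_zero]

/-- Lattice vectors of `E8` with mutual inner products `1`, together with `0`. -/
def latVec : Fin 9 → Fin 8 → ℝ :=
  ![fun _ => 0, ![1, 1, 0, 0, 0, 0, 0, 0], ![1, 0, 1, 0, 0, 0, 0, 0], ![1, 0, 0, 1, 0, 0, 0, 0],
    ![1, 0, 0, 0, 1, 0, 0, 0], ![1, 0, 0, 0, 0, 1, 0, 0], ![1, 0, 0, 0, 0, 0, 1, 0],
    ![1, 0, 0, 0, 0, 0, 0, 1], fun _ => 1 / 2]

/-- Half the squared length of `latVec i`. -/
def halfNorm : Fin 9 → ℂ := ![0, 1, 1, 1, 1, 1, 1, 1, 1]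

theorem mem_E8Lattice_of_int {x : Fin 8 → ℝ} (n : Fin 8 → ℤ) (hn : ∀ i, x i = n i) (s : ℤ)
    (hs : ∑ i, n i = 2 * s) : x ∈ E8Lattice :=
  ⟨Or.inl fun i => ⟨n i, hn i⟩, s, by simp only [hn]; exact_mod_cast hs⟩

theorem mem_E8Lattice_of_half {x : Fin 8 → ℝ} (n : Fin 8 → ℤ) (hn : ∀ i, x i = n i + 1 / 2)
    (s : ℤ) (hs : ∑ i, n i + 4 = 2 * s) : x ∈ E8Lattice := by
  refine ⟨Or.inr fun i => ⟨n i, hn i⟩, s, ?_⟩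
  simp only [hn, Finset.sum_add_distrib]
  have : ((∑ i, n i + 4 : ℤ) : ℝ) = ((2 * s : ℤ) : ℝ) := by rw [hs]
  push_cast at this
  simp; linarith

theorem zero_mem_E8Lattice : (fun _ => 0 : Fin 8 → ℝ) ∈ E8Lattice :=
  mem_E8Lattice_of_int (fun _ => 0) (by simp) 0 (by simp)

theorem latVec_mem (i : Fin 9) : latVec i ∈ E8Lattice := by
  fin_cases i
  · exact zero_mem_E8Lattice
  · exact mem_E8Lattice_of_int ![1, 1, 0, 0, 0, 0, 0, 0]
      (by intro i; fin_cases i <;> simp [latVec]) 1 (by decide)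
  · exact mem_E8Lattice_of_int ![1, 0, 1, 0, 0, 0, 0, 0]
      (by intro i; fin_cases i <;> simp [latVec]) 1 (by decide)
  · exact mem_E8Lattice_of_int ![1, 0, 0, 1, 0, 0, 0, 0]
      (by intro i; fin_cases i <;> simp [latVec]) 1 (by decide)
  · exact mem_E8Lattice_of_int ![1, 0, 0, 0, 1, 0, 0, 0]
      (by intro i; fin_cases i <;> simp [latVec]) 1 (by decide)
  · exact mem_E8Lattice_of_int ![1, 0, 0, 0, 0, 1, 0, 0]
      (by intro i; fin_cases i <;> simp [latVec]) 1 (by decide)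
  · exact mem_E8Lattice_of_int ![1, 0, 0, 0, 0, 0, 1, 0]
      (by intro i; fin_cases i <;> simp [latVec]) 1 (by decide)
  · exact mem_E8Lattice_of_int ![1, 0, 0, 0, 0, 0, 0, 1]
      (by intro i; fin_cases i <;> simp [latVec]) 1 (by decide)
  · exact mem_E8Lattice_of_half (fun _ => 0) (by intro i; simp [latVec]) 2 (by simp)

theorem dotC_latVec_self (i : Fin 9) :
    dotC (cv (latVec i)) (cv (latVec i)) = 2 * halfNorm i := by
  fin_cases i <;> simp [dotC, cv, latVec, halfNorm, Fin.sum_univ_eight] <;> norm_num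

theorem IsWeakJacobiFormE8.add_lattice (h : IsWeakJacobiFormE8 k m φ) {β : Fin 8 → ℝ}
    (hβ : β ∈ E8Lattice) {τ : ℂ} (hτ : 0 < τ.im) (z : Fin 8 → ℂ) :
    φ τ (fun i => z i + (β i : ℂ)) = φ τ z := by
  have := h.quasi_periodic _ zero_mem_E8Lattice β hβ τ hτ z
  simpa [dotC, cv] using this

theorem IsWeakJacobiFormE8.add_mul_lattice (h : IsWeakJacobiFormE8 k m φ) {α : Fin 8 → ℝ}
    (hα : α ∈ E8Lattice) {τ : ℂ} (hτ : 0 < τ.im) (z : Fin 8 → ℂ) :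
    φ τ (fun i => z i + τ * (α i : ℂ)) =
      Complex.exp (-(m : ℂ) * πC * I * (τ * dotC (cv α) (cv α) + 2 * dotC z (cv α))) * φ τ z := by
  have := h.quasi_periodic α hα _ zero_mem_E8Lattice τ hτ z
  simpa using this

theorem IsWeakJacobiFormE8.add_int (h : IsWeakJacobiFormE8 k m φ) (n : ℤ) {τ : ℂ}
    (hτ : 0 < τ.im) (z : Fin 8 → ℂ) : φ (τ + n) z = φ τ z := by
  have := h.modular 1 n 0 1 (by simp) τ hτ z
  simpa using this

/-- The additive group of periods of a weak Jacobi form. -/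
def periods (φ : ℂ → (Fin 8 → ℂ) → ℂ) : AddSubgroup (Fin 8 → ℂ) where
  carrier := {β | ∀ τ : ℂ, 0 < τ.im → ∀ z, φ τ (z + β) = φ τ z}
  add_mem' := by
    intro a b ha hb τ hτ z
    rw [← add_assoc, hb τ hτ, ha τ hτ]
  zero_mem' := by intro τ _ z; rw [add_zero]
  neg_mem' := by
    intro a ha τ hτ z
    rw [← ha τ hτ (z + -a), neg_add_cancel_right]

theorem IsWeakJacobiFormE8.cv_mem_periods (h : IsWeakJacobiFormE8 k m φ) {β : Fin 8 → ℝ}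
    (hβ : β ∈ E8Lattice) : cv β ∈ periods φ :=
  fun _ hτ z => h.add_lattice hβ hτ z

/-- A weak Jacobi form in the coordinates `y` with `τ = ∑ y i` and `z = ∑ y i • latVec i`,
normalised so as to be holomorphic in the variables `qExp (y i)`. -/
def coordForm (m : ℕ) (φ : ℂ → (Fin 8 → ℂ) → ℂ) (y : Fin 9 → ℂ) : ℂ :=
  qExp (m * ∑ i, halfNorm i * y i) * φ (∑ i, y i) (∑ i, y i • cv (latVec i))

theorem IsWeakJacobiFormE8.coordForm_differentiableAt (h : IsWeakJacobiFormE8 k m φ)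
    {y : Fin 9 → ℂ} (hy : 0 < (∑ i, y i).im) : DifferentiableAt ℂ (coordForm m φ) y := by
  unfold coordForm
  refine DifferentiableAt.mul ?_ ?_
  · exact (differentiable_qExp _).comp y (by fun_prop)
  · exact h.differentiableAt_comp (by fun_prop) (by fun_prop) hy

theorem IsWeakJacobiFormE8.coordForm_add_int (h : IsWeakJacobiFormE8 k m φ)
    {y : Fin 9 → ℂ} (hy : 0 < (∑ i, y i).im) (n : Fin 9 → ℤ) :
    coordForm m φ (fun i => y i + n i) = coordForm m φ y := by
  unfold coordForm
  have h1 : qExp (m * ∑ i, halfNorm i * (y i + n i)) = qExp (m * ∑ i, halfNorm i * y i) := by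
    have : (m : ℂ) * ∑ i, halfNorm i * (y i + n i) = m * ∑ i, halfNorm i * y i +
        ((m * ∑ i, (![0, 1, 1, 1, 1, 1, 1, 1, 1] : Fin 9 → ℤ) i * n i : ℤ) : ℂ) := by
      push_cast
      rw [← mul_add, ← Finset.sum_add_distrib]
      congr 1
      refine Finset.sum_congr rfl fun i _ => ?_
      rw [mul_add]
      congr 2
      fin_cases i <;> simp [halfNorm]
    rw [this, qExp_add, qExp_int, mul_one]
  have h2 : ∑ i, (y i + n i) = ∑ i, y i + ((∑ i, n i : ℤ) : ℂ) := by
    push_cast; rw [Finset.sum_add_distrib]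
  have h3 : ∑ i, (y i + n i) • cv (latVec i) =
      ∑ i, y i • cv (latVec i) + ∑ i, (n i) • cv (latVec i) := by
    rw [← Finset.sum_add_distrib]
    refine Finset.sum_congr rfl fun i _ => ?_
    rw [add_smul, Int.cast_smul_eq_zsmul]
  have h4 : ∑ i, (n i) • cv (latVec i) ∈ periods φ :=
    sum_mem fun i _ => zsmul_mem (h.cv_mem_periods (latVec_mem i)) _
  rw [h1, h2, h3, h.add_int _ hy, h4 _ hy]

/-- `coordForm` as a function of the exponentials of its variables. -/
def expForm (m : ℕ) (φ : ℂ → (Fin 8 → ℂ) → ℂ) (Y : Fin 9 → ℂ) : ℂ :=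
  coordForm m φ fun i => Complex.log (Y i) / (2 * πC * I)

theorem IsWeakJacobiFormE8.expForm_qExp (h : IsWeakJacobiFormE8 k m φ)
    {y : Fin 9 → ℂ} (hy : 0 < (∑ i, y i).im) :
    expForm m φ (fun i => qExp (y i)) = coordForm m φ y := by
  choose n hn using fun i => log_qExp_exists (y i)
  unfold expForm
  simp only [hn]
  exact h.coordForm_add_int hy n

theorem im_sum_pos_of_norm_prod_lt_one {y : Fin 9 → ℂ} (hy : ‖∏ i, qExp (y i)‖ < 1) :
    0 < (∑ i, y i).im := by
  have h1 : ∏ i, qExp (y i) = qExp (∑ i, y i) := by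
    simp only [qExp, ← Complex.exp_sum, Finset.mul_sum]
  rw [h1, norm_qExp, Real.exp_lt_one_iff] at hy
  have := Real.pi_pos
  by_contra hc
  push Not at hc
  nlinarith

/-- Local formula for `expForm` through a branch of the logarithm at a given point. -/
theorem IsWeakJacobiFormE8.expForm_eq_local (h : IsWeakJacobiFormE8 k m φ)
    {y Y : Fin 9 → ℂ} (hY : ∀ i, Y i ≠ 0) (hY1 : ‖∏ i, Y i‖ < 1) :
    expForm m φ Y =
      coordForm m φ fun i => y i + Complex.log (Y i / qExp (y i)) / (2 * πC * I) := by
  have hq : ∀ i, qExp (y i + Complex.log (Y i / qExp (y i)) / (2 * πC * I)) = Y i := by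
    intro i
    rw [qExp_add, qExp_log (div_ne_zero (hY i) (qExp_ne_zero _)),
      mul_div_cancel₀ _ (qExp_ne_zero _)]
  rw [← h.expForm_qExp]
  · simp only [hq]
  · apply im_sum_pos_of_norm_prod_lt_one
    simpa only [hq] using hY1

theorem IsWeakJacobiFormE8.expForm_differentiableAt (h : IsWeakJacobiFormE8 k m φ)
    {Y : Fin 9 → ℂ} (hY : ∀ i, Y i ≠ 0) (hY1 : ‖∏ i, Y i‖ < 1) :
    DifferentiableAt ℂ (expForm m φ) Y := by
  set y : Fin 9 → ℂ := fun i => Complex.log (Y i) / (2 * πC * I) with hy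
  have hq : ∀ i, qExp (y i) = Y i := fun i => qExp_log (hY i)
  have hev : expForm m φ =ᶠ[𝓝 Y] fun Y' =>
      coordForm m φ fun i => y i + Complex.log (Y' i / Y i) / (2 * πC * I) := by
    have h1 : ∀ᶠ Y' in 𝓝 Y, ∀ i, Y' i ≠ 0 := by
      rw [eventually_all]
      intro i
      exact (continuous_apply i).continuousAt.eventually_ne (hY i)
    have h2 : ∀ᶠ Y' in 𝓝 Y, ‖∏ i, Y' i‖ < 1 := by
      have hc : Continuous fun Y' : Fin 9 → ℂ => ‖∏ i, Y' i‖ := by fun_prop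
      exact hc.continuousAt.eventually_lt continuousAt_const hY1
    filter_upwards [h1, h2] with Y' h1 h2
    rw [h.expForm_eq_local (y := y) h1 h2]
    simp only [hq]
  refine DifferentiableAt.congr_of_eventuallyEq ?_ hev
  have hval : (fun i => y i + Complex.log (Y i / Y i) / (2 * πC * I)) = y := by
    funext i
    rw [div_self (hY i), Complex.log_one, zero_div, add_zero]
  refine DifferentiableAt.comp (g := coordForm m φ) Y ?_ ?_
  · rw [hval]
    exact h.coordForm_differentiableAt
      (im_sum_pos_of_norm_prod_lt_one (by simpa only [hq] using hY1))
  · refine differentiableAt_pi.2 fun i => ?_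
    simp only [div_eq_mul_inv _ (2 * πC * I)]
    refine (differentiableAt_const _).add (DifferentiableAt.mul_const ?_ _)
    refine DifferentiableAt.clog (by fun_prop) ?_
    rw [div_self (hY i)]
    exact Complex.one_mem_slitPlane

theorem IsWeakJacobiFormE8.coordForm_update (h : IsWeakJacobiFormE8 k m φ) (y : Fin 9 → ℂ)
    (i : Fin 9) : ∃ (K c : ℂ) (z : Fin 8 → ℂ), ∀ w : ℂ, 0 < (w + c).im →
      coordForm m φ (Function.update y i w) = K * φ (w + c) z := by
  set c := ∑ j ∈ univ.erase i, y j with hc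
  set z := ∑ j ∈ univ.erase i, y j • cv (latVec j) - c • cv (latVec i) with hz
  set b := ∑ j ∈ univ.erase i, halfNorm j * y j with hb
  refine ⟨qExp (m * (b - halfNorm i * c)) *
    Complex.exp (-(m : ℂ) * πC * I * (2 * dotC z (cv (latVec i)))), c, z, fun w hw => ?_⟩
  have hsum : ∀ (f : Fin 9 → ℂ → ℂ), ∑ j, f j (Function.update y i w j) =
      f i w + ∑ j ∈ univ.erase i, f j (y j) := by
    intro f
    rw [← Finset.add_sum_erase _ _ (Finset.mem_univ i), Function.update_self]
    congr 1
    refine Finset.sum_congr rfl fun j hj => ?_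
    rw [Function.update_of_ne (Finset.ne_of_mem_erase hj)]
  have h1 : ∑ j, Function.update y i w j = w + c := hsum fun _ x => x
  have h2 : ∑ j, halfNorm j * Function.update y i w j = halfNorm i * w + b :=
    hsum fun j x => halfNorm j * x
  have h3 : ∑ j, Function.update y i w j • cv (latVec j) =
      fun l => z l + (w + c) * ((latVec i l : ℝ) : ℂ) := by
    funext l
    rw [Finset.sum_apply]
    simp only [Pi.smul_apply, smul_eq_mul]
    rw [hsum fun j x => x * cv (latVec j) l, hz]
    simp only [Pi.sub_apply, Finset.sum_apply, Pi.smul_apply, smul_eq_mul, cv]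
    ring
  unfold coordForm
  rw [h1, h2, h3, h.add_mul_lattice (latVec_mem i) hw, dotC_latVec_self, ← mul_assoc]
  congr 1
  rw [qExp, qExp, ← Complex.exp_add, ← Complex.exp_add]
  congr 1
  ring

theorem IsWeakJacobiFormE8.expForm_bounded_at_zero (h : IsWeakJacobiFormE8 k m φ)
    (Y : Fin 9 → ℂ) (i : Fin 9) :
    ∃ C, ∀ᶠ u in 𝓝[≠] (0 : ℂ), ‖expForm m φ (Function.update Y i u)‖ ≤ C := by
  obtain ⟨K, c, z, hK⟩ :=
    h.coordForm_update (fun j => Complex.log (Y j) / (2 * πC * I)) i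
  obtain ⟨C, hC⟩ := h.exists_bound_im z
  refine ⟨‖K‖ * C, ?_⟩
  have him : ∀ᶠ u in 𝓝[≠] (0 : ℂ), 1 ≤ (Complex.log u / (2 * πC * I) + c).im := by
    have hsmall : ∀ᶠ u in 𝓝[≠] (0 : ℂ), ‖u‖ < Real.exp (-(2 * Real.pi * (1 - c.im))) := by
      refine nhdsWithin_le_nhds ?_
      have := Metric.ball_mem_nhds (0 : ℂ) (Real.exp_pos (-(2 * Real.pi * (1 - c.im))))
      filter_upwards [this] with x hx using by simpa using hx
    filter_upwards [hsmall, self_mem_nhdsWithin] with u hu hu0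
    have h1 : ‖qExp (Complex.log u / (2 * πC * I))‖ = ‖u‖ := by rw [qExp_log hu0]
    rw [norm_qExp] at h1
    rw [← h1, Real.exp_lt_exp] at hu
    have h2 := Real.pi_pos
    rw [Complex.add_im]
    have h3 : 2 * Real.pi * (1 - c.im) < 2 * Real.pi * (Complex.log u / (2 * πC * I)).im := by
      linarith
    have := lt_of_mul_lt_mul_left h3 (by positivity)
    linarith
  filter_upwards [him] with u hu
  have heq : expForm m φ (Function.update Y i u) =
      coordForm m φ (Function.update (fun j => Complex.log (Y j) / (2 * πC * I)) i
        (Complex.log u / (2 * πC * I))) := by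
    unfold expForm
    congr 1
    funext j
    by_cases hj : j = i
    · subst hj; simp
    · simp [Function.update_of_ne hj]
  rw [heq, hK _ (by linarith), norm_mul]
  gcongr
  exact hC _ hu

theorem IsWeakJacobiFormE8.expForm_bound (h : IsWeakJacobiFormE8 k m φ) {r : Fin 9 → ℝ}
    (hr : ∀ i, 0 < r i) (hr1 : ∏ i, r i < 1) :
    ∃ M, 0 ≤ M ∧ ∀ Y : Fin 9 → ℂ, (∀ i, Y i ≠ 0) → (∀ i, ‖Y i‖ ≤ r i) → ‖expForm m φ Y‖ ≤ M :=
  exists_bound_punctured_polydisc (fun _ hY hY1 => h.expForm_differentiableAt hY hY1)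
    (fun Y _ i => h.expForm_bounded_at_zero Y i) hr hr1

/-- A point of order three modulo the `E8` lattice. -/
def torsionVec : Fin 8 → ℂ := ![5 / 6, 1 / 6, 1 / 6, 1 / 6, 1 / 6, 1 / 6, 1 / 6, 1 / 6]

theorem dotC_torsionVec_self : dotC torsionVec torsionVec = 8 / 9 := by
  simp [dotC, torsionVec, Fin.sum_univ_eight]; norm_num

theorem dotC_torsionVec_latVec (i : Fin 9) :
    dotC torsionVec (cv (latVec i)) = halfNorm i := by
  fin_cases i <;> simp [dotC, cv, latVec, halfNorm, torsionVec, Fin.sum_univ_eight] <;> norm_num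

theorem sum_latVec : ∑ i, cv (latVec i) = (9 : ℂ) • torsionVec := by
  funext j
  rw [Finset.sum_apply]
  fin_cases j <;> simp [cv, latVec, torsionVec, Fin.sum_univ_succ] <;> norm_num

theorem three_smul_torsionVec_mem :
    ∃ β ∈ E8Lattice, cv β = (3 : ℂ) • torsionVec := by
  refine ⟨![5 / 2, 1 / 2, 1 / 2, 1 / 2, 1 / 2, 1 / 2, 1 / 2, 1 / 2],
    mem_E8Lattice_of_half ![2, 0, 0, 0, 0, 0, 0, 0] ?_ 3 (by decide), ?_⟩
  · intro i
    fin_cases i <;> simp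
    norm_num
  · funext i
    fin_cases i <;> simp [cv, torsionVec] <;> norm_num

theorem dotC_comm (z w : Fin 8 → ℂ) : dotC z w = dotC w z :=
  Finset.sum_congr rfl fun _ _ => mul_comm _ _

theorem dotC_add_left (z w u : Fin 8 → ℂ) : dotC (z + w) u = dotC z u + dotC w u := by
  simp [dotC, add_mul, Finset.sum_add_distrib]

theorem dotC_add_right (z w u : Fin 8 → ℂ) : dotC u (z + w) = dotC u z + dotC u w := by
  simp [dotC, mul_add, Finset.sum_add_distrib]

theorem dotC_smul_left (c : ℂ) (z u : Fin 8 → ℂ) : dotC (c • z) u = c * dotC z u := by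
  simp [dotC, Finset.mul_sum, mul_assoc]

theorem dotC_smul_right (c : ℂ) (z u : Fin 8 → ℂ) : dotC u (c • z) = c * dotC u z := by
  rw [dotC_comm, dotC_smul_left, dotC_comm]

theorem dotC_sum_right {ι : Type*} (s : Finset ι) (f : ι → Fin 8 → ℂ) (u : Fin 8 → ℂ) :
    dotC u (∑ i ∈ s, f i) = ∑ i ∈ s, dotC u (f i) := by
  simp only [dotC, Finset.sum_apply, Finset.mul_sum]
  exact Finset.sum_comm

/-- The expansion of `φ` around the torsion point `(p τ + r) • torsionVec`. -/
def twist (m : ℕ) (φ : ℂ → (Fin 8 → ℂ) → ℂ) (p r : ℤ) (τ : ℂ) (z : Fin 8 → ℂ) : ℂ :=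
  Complex.exp (m * πC * I * (p ^ 2 * (8 / 9) * τ + 2 * p * dotC torsionVec z)) *
    φ τ (z + (p * τ + r) • torsionVec)

theorem IsWeakJacobiFormE8.twist_differentiableAt (h : IsWeakJacobiFormE8 k m φ) (p r : ℤ)
    {E : Type*} [NormedAddCommGroup E]
    [NormedSpace ℂ E] {f : E → ℂ} {g : E → Fin 8 → ℂ} {x : E}
    (hf : DifferentiableAt ℂ f x) (hg : DifferentiableAt ℂ g x) (hx : 0 < (f x).im) :
    DifferentiableAt ℂ (fun t => twist m φ p r (f t) (g t)) x := by
  unfold twist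
  refine DifferentiableAt.mul ?_ (h.differentiableAt_comp hf (by fun_prop) hx)
  unfold dotC
  fun_prop

theorem IsWeakJacobiFormE8.twist_add_one (h : IsWeakJacobiFormE8 k m φ) (p r : ℤ)
    {τ : ℂ} (hτ : 0 < τ.im) (z : Fin 8 → ℂ) :
    twist m φ p r (τ + 1) z =
      Complex.exp (m * πC * I * (p ^ 2 * (8 / 9))) * twist m φ p (p + r) τ z := by
  unfold twist
  have h1 : ((p : ℂ) * (τ + 1) + r) = p * τ + ((p + r : ℤ) : ℂ) := by push_cast; ring
  have h2 := h.add_int 1 hτ (z + (p * τ + ((p + r : ℤ) : ℂ)) • torsionVec)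
  rw [Int.cast_one] at h2
  rw [h1, h2, ← mul_assoc, ← Complex.exp_add]
  congr 2
  ring

theorem IsWeakJacobiFormE8.twist_inv (h : IsWeakJacobiFormE8 k m φ) (p r : ℤ)
    {τ : ℂ} (hτ : 0 < τ.im) (z : Fin 8 → ℂ) :
    twist m φ p r (-1 / τ) (τ⁻¹ • z) =
      τ ^ k * Complex.exp (m * πC * I * (dotC z z / τ)) *
        Complex.exp (-(2 * m * πC * I * (p * r * (8 / 9)))) * twist m φ r (-p) τ z := by
  have hτ0 : τ ≠ 0 := by rintro rfl; simp at hτ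
  set w := z + ((r : ℂ) * τ + ((-p : ℤ) : ℂ)) • torsionVec with hw
  have h1 := h.modular 0 (-1) 1 0 (by simp) τ hτ w
  have h2 : τ⁻¹ • z + ((p : ℂ) * (-1 / τ) + r) • torsionVec = fun i => w i / τ := by
    funext i
    simp only [hw, Pi.add_apply, Pi.smul_apply, smul_eq_mul]
    push_cast
    field_simp
    ring
  have h3 : dotC w w = dotC z z + 2 * (r * τ - p) * dotC torsionVec z +
      (r * τ - p) ^ 2 * (8 / 9) := by
    rw [hw]
    simp only [dotC_add_left, dotC_add_right, dotC_smul_left, dotC_smul_right,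
      dotC_torsionVec_self, dotC_comm z torsionVec]
    push_cast
    ring
  unfold twist
  rw [h2]
  simp only [Int.cast_zero, zero_mul, Int.cast_neg, Int.cast_one, one_mul, add_zero, zero_add]
    at h1
  rw [h1, h3, ← hw, dotC_smul_right]
  rw [show ∀ a b c d : ℂ, a * (b * c * d) = b * (a * c) * d by intros; ring,
    show ∀ a b c d e : ℂ, a * b * c * (d * e) = a * (b * c * d) * e by intros; ring]
  simp only [← Complex.exp_add]
  congr 3
  field_simp
  ring

theorem IsWeakJacobiFormE8.twist_add_three (h : IsWeakJacobiFormE8 k m φ) (p r : ℤ)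
    {τ : ℂ} (hτ : 0 < τ.im) (z : Fin 8 → ℂ) :
    twist m φ p (r + 3) τ z = twist m φ p r τ z := by
  obtain ⟨β, hβ, hβ3⟩ := three_smul_torsionVec_mem
  have hp := h.cv_mem_periods hβ
  rw [hβ3] at hp
  unfold twist
  have h1 : z + ((p : ℂ) * τ + ((r + 3 : ℤ) : ℂ)) • torsionVec =
      (z + ((p : ℂ) * τ + r) • torsionVec) + (3 : ℂ) • torsionVec := by
    push_cast
    module
  rw [h1, hp τ hτ]

theorem neg_one_mem_WeylE8 : (-1 : Matrix (Fin 8) (Fin 8) ℝ) ∈ WeylE8 := by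
  have hneg : ∀ x ∈ E8Lattice, -x ∈ E8Lattice := by
    rintro x ⟨hx, s, hs⟩
    refine ⟨?_, -s, by simp [hs]⟩
    rcases hx with hx | hx
    · refine Or.inl fun i => ?_
      obtain ⟨n, hn⟩ := hx i
      exact ⟨-n, by simp [hn]⟩
    · refine Or.inr fun i => ?_
      obtain ⟨n, hn⟩ := hx i
      exact ⟨-n - 1, by simp [hn]; ring⟩
  refine ⟨fun x y => ?_, fun x hx => ?_, fun x hx => ⟨-x, hneg x hx, ?_⟩⟩
  · simp [dotR, Matrix.neg_mulVec]
  · simpa [Matrix.neg_mulVec] using hneg x hx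
  · simp [Matrix.neg_mulVec]

theorem IsWeakJacobiFormE8.neg (h : IsWeakJacobiFormE8 k m φ) {τ : ℂ} (hτ : 0 < τ.im)
    (z : Fin 8 → ℂ) : φ τ (-z) = φ τ z := by
  rw [← h.weyl_inv _ neg_one_mem_WeylE8 τ hτ z]
  congr 1
  funext i
  simp [actC, Matrix.one_apply, apply_ite Complex.ofReal]

theorem IsWeakJacobiFormE8.twist_neg (h : IsWeakJacobiFormE8 k m φ) (p r : ℤ)
    {τ : ℂ} (hτ : 0 < τ.im) (z : Fin 8 → ℂ) :
    twist m φ (-p) (-r) τ z = twist m φ p r τ (-z) := by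
  unfold twist
  have h1 : -z + ((p : ℂ) * τ + r) • torsionVec =
      -(z + (((-p : ℤ) : ℂ) * τ + ((-r : ℤ) : ℂ)) • torsionVec) := by
    push_cast
    module
  rw [h1, h.neg hτ]
  congr 3
  have : dotC torsionVec (-z) = -dotC torsionVec z := by simp [dotC]
  rw [this]
  push_cast
  ring

theorem coordForm_eq_twist (y : Fin 9 → ℂ) :
    coordForm m φ y = qExp (4 * m * (∑ i, y i) / 9) *
      twist m φ 1 0 (∑ i, y i) (∑ i, (y i - (∑ i, y i) / 9) • cv (latVec i)) := by
  set τ := ∑ i, y i with hτ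
  have h1 : ∑ i, (y i - τ / 9) • cv (latVec i) = ∑ i, y i • cv (latVec i) - τ • torsionVec := by
    simp only [sub_smul, Finset.sum_sub_distrib]
    rw [← Finset.smul_sum, sum_latVec, smul_smul]
    congr 2
    ring
  have h2 : dotC torsionVec (∑ i, (y i - τ / 9) • cv (latVec i)) =
      ∑ i, halfNorm i * y i - 8 / 9 * τ := by
    rw [dotC_sum_right]
    simp only [dotC_smul_right, dotC_torsionVec_latVec]
    simp only [sub_mul, Finset.sum_sub_distrib, ← Finset.mul_sum]
    have : ∑ i, halfNorm i = 8 := by simp [halfNorm, Fin.sum_univ_succ]; norm_num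
    rw [this]
    congr 1
    · exact Finset.sum_congr rfl fun _ _ => mul_comm _ _
    · ring
  unfold twist coordForm
  rw [h2, h1, ← mul_assoc, qExp, qExp, ← Complex.exp_add]
  congr 2
  · push_cast; ring
  · push_cast; module

/-- Coordinates of a vector with respect to `latVec`, normalised to have sum zero. -/
def latCoord (z : Fin 8 → ℂ) : Fin 9 → ℂ :=
  let t := (z 1 + z 2 + z 3 + z 4 + z 5 + z 6 + z 7 - z 0) / 3
  ![-(z 1 + z 2 + z 3 + z 4 + z 5 + z 6 + z 7 - 5 / 2 * t), z 1 - t / 2, z 2 - t / 2, z 3 - t / 2,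
    z 4 - t / 2, z 5 - t / 2, z 6 - t / 2, z 7 - t / 2, t]

theorem sum_latCoord (z : Fin 8 → ℂ) : ∑ i, latCoord z i = 0 := by
  simp [latCoord, Fin.sum_univ_succ]; ring

theorem sum_latCoord_smul (z : Fin 8 → ℂ) : ∑ i, latCoord z i • cv (latVec i) = z := by
  funext j
  rw [Finset.sum_apply]
  fin_cases j <;> simp [latCoord, cv, latVec, Fin.sum_univ_succ] <;> ring

theorem continuous_latCoord (i : Fin 9) : Continuous fun z => latCoord z i := by
  fin_cases i <;> simp [latCoord] <;> fun_prop

theorem latCoord_zero (i : Fin 9) : latCoord 0 i = 0 := by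
  fin_cases i <;> simp [latCoord]

/-- Vanishing of `twist m φ p r` to order `d` along every line through `z = 0`. -/
def TwistVanishes (m : ℕ) (φ : ℂ → (Fin 8 → ℂ) → ℂ) (p r : ℤ) (d : ℕ) : Prop :=
  ∀ τ : ℂ, 0 < τ.im → ∀ z : Fin 8 → ℂ,
    (fun x : ℂ => twist m φ p r τ (x • z)) =O[𝓝[≠] 0] fun x => x ^ d

theorem IsWeakJacobiFormE8.twist_line_differentiable (h : IsWeakJacobiFormE8 k m φ) (p r : ℤ)
    {τ : ℂ} (hτ : 0 < τ.im) (z : Fin 8 → ℂ) :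
    Differentiable ℂ fun x : ℂ => twist m φ p r τ (x • z) := fun x =>
  h.twist_differentiableAt p r (differentiableAt_const τ) (by fun_prop) hτ

theorem IsWeakJacobiFormE8.exists_twist_bound (h : IsWeakJacobiFormE8 k m φ) (p r : ℤ)
    {τ₀ : ℂ} (hτ₀ : 0 < τ₀.im) (R : ℝ) :
    ∃ M, 0 ≤ M ∧ ∃ ε > 0, ∀ τ ∈ Metric.ball τ₀ ε, 0 < τ.im ∧ ∀ z : Fin 8 → ℂ, ‖z‖ ≤ R →
      ‖twist m φ p r τ z‖ ≤ M := by
  obtain ⟨ε, hε, hsub⟩ := Metric.isOpen_iff.1 isOpen_im_pos τ₀ hτ₀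
  have hsub' : Metric.closedBall τ₀ (ε / 2) ⊆ {τ : ℂ | 0 < τ.im} :=
    (Metric.closedBall_subset_ball (by linarith)).trans hsub
  have hK : IsCompact (Metric.closedBall τ₀ (ε / 2) ×ˢ Metric.closedBall (0 : Fin 8 → ℂ) R) :=
    (isCompact_closedBall _ _).prod (isCompact_closedBall _ _)
  have hc : ContinuousOn (fun q : ℂ × (Fin 8 → ℂ) => twist m φ p r q.1 q.2)
      (Metric.closedBall τ₀ (ε / 2) ×ˢ Metric.closedBall (0 : Fin 8 → ℂ) R) := fun q hq =>
    (h.twist_differentiableAt p r differentiableAt_fst differentiableAt_snd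
      (hsub' hq.1)).continuousAt.continuousWithinAt
  obtain ⟨M, hM⟩ := hK.exists_bound_of_continuousOn hc
  refine ⟨max M 0, le_max_right _ _, ε / 2, by linarith, fun τ hτ => ?_⟩
  have hτ' := Metric.ball_subset_closedBall hτ
  exact ⟨hsub' hτ', fun z hz => (hM (τ, z) ⟨hτ', by simpa using hz⟩).trans (le_max_left _ _)⟩

theorem IsWeakJacobiFormE8.exists_twist_bound_pow (h : IsWeakJacobiFormE8 k m φ) {p r : ℤ}
    {d : ℕ} (hv : TwistVanishes m φ p r d) {τ₀ : ℂ} (hτ₀ : 0 < τ₀.im) :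
    ∃ M, ∀ᶠ τ in 𝓝 τ₀, ∀ z : Fin 8 → ℂ, ‖z‖ ≤ 1 → ‖twist m φ p r τ z‖ ≤ M * ‖z‖ ^ d := by
  obtain ⟨M, hM0, ε, hε, hM⟩ := h.exists_twist_bound p r hτ₀ 2
  refine ⟨M, ?_⟩
  filter_upwards [Metric.ball_mem_nhds τ₀ hε] with τ hτ z hz
  obtain ⟨hτp, hMz⟩ := hM τ hτ
  by_cases hz0 : z = 0
  · subst hz0
    rcases Nat.eq_zero_or_pos d with rfl | hd
    · simpa using hMz 0 (by simp)
    · have hline := hv τ hτp 0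
      have := norm_le_of_isBigO_pow one_pos (h.twist_line_differentiable p r hτp 0).differentiableOn
        (M := M) (fun x _ => hMz _ (by simp)) d hline (x := 0) (by simp)
      simpa [hd.ne'] using this
  have hzp : 0 < ‖z‖ := norm_pos_iff.2 hz0
  have := norm_le_of_isBigO_pow (R := 2 / ‖z‖) (by positivity)
    (h.twist_line_differentiable p r hτp z).differentiableOn (M := M)
    (fun x hx => hMz _ (by
      rw [norm_smul]
      rw [mem_ball_zero_iff, lt_div_iff₀ hzp] at hx
      exact hx.le)) d (hv τ hτp z) (x := 1) (by
      rw [norm_one, lt_div_iff₀ hzp]; linarith)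
  rw [one_smul, norm_one, one_pow, mul_one] at this
  refine this.trans ?_
  rw [div_pow, div_div_eq_mul_div]
  have h2 : (1 : ℝ) ≤ 2 ^ d := one_le_pow₀ (by norm_num)
  exact div_le_self (by positivity) h2

/-- `coordForm` vanishes to order `d` along curves through the diagonal. -/
theorem IsWeakJacobiFormE8.coordForm_isBigO (h : IsWeakJacobiFormE8 k m φ) {d : ℕ}
    (hv : TwistVanishes m φ 1 0 d) {y : ℂ → Fin 9 → ℂ} (hy : DifferentiableAt ℂ y 0) {c : ℂ}
    (hc : 0 < c.im) (hy0 : y 0 = fun _ => c) :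
    (fun s => coordForm m φ (y s)) =O[𝓝 0] fun s => s ^ d := by
  set τ : ℂ → ℂ := fun s => ∑ i, y s i with hτ
  have hyi : ∀ i, DifferentiableAt ℂ (fun s => y s i) 0 := differentiableAt_pi.1 hy
  have hτd : DifferentiableAt ℂ τ 0 := by
    rw [hτ]; exact DifferentiableAt.fun_sum fun i _ => hyi i
  have hτ0 : τ 0 = 9 * c := by simp [hτ, hy0]
  set Z : ℂ → Fin 8 → ℂ := fun s => ∑ i, (y s i - τ s / 9) • cv (latVec i) with hZ
  have hZd : DifferentiableAt ℂ Z 0 := by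
    rw [hZ]
    refine DifferentiableAt.fun_sum fun i _ => ?_
    exact ((hyi i).sub (hτd.div_const 9)).smul_const _
  have hZ0 : Z 0 = 0 := by
    simp only [hZ, hτ0, hy0]
    refine Finset.sum_eq_zero fun i _ => ?_
    rw [mul_div_cancel_left₀ _ (by norm_num : (9 : ℂ) ≠ 0), sub_self, zero_smul]
  have hZO : Z =O[𝓝 0] fun s => s := by
    have := hZd.isBigO_sub
    simpa [hZ0] using this
  have hτim : 0 < (τ 0).im := by
    rw [hτ0]
    simp
    linarith
  obtain ⟨M, hM⟩ := h.exists_twist_bound_pow hv hτim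
  have h1 : (fun s => twist m φ 1 0 (τ s) (Z s)) =O[𝓝 0] fun s => s ^ d := by
    have ha : (fun s => twist m φ 1 0 (τ s) (Z s)) =O[𝓝 0] fun s => ‖Z s‖ ^ d := by
      refine IsBigO.of_bound M ?_
      have hz1 : ∀ᶠ s in 𝓝 (0 : ℂ), ‖Z s‖ < 1 := by
        refine hZd.continuousAt.norm.eventually_lt continuousAt_const ?_
        simp [hZ0]
      filter_upwards [hτd.continuousAt.eventually hM, hz1] with s hs hs1
      simpa using hs _ hs1.le
    exact ha.trans ((hZO.norm_left).pow d)
  have h2 : (fun s => qExp (4 * m * τ s / 9)) =O[𝓝 0] fun _ => (1 : ℂ) := by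
    have : ContinuousAt (fun s => qExp (4 * m * τ s / 9)) 0 :=
      (differentiable_qExp _).continuousAt.comp
        (((hτd.const_mul (4 * (m : ℂ))).div_const 9).continuousAt)
    exact this.isBigO_one ℂ
  have h3 := h2.mul h1
  simp only [one_mul] at h3
  refine h3.congr_left fun s => ?_
  exact (coordForm_eq_twist (y s)).symm

theorem norm_prod_lt_one_of_le_half {Y : Fin 9 → ℂ} (hY : ∀ i, ‖Y i‖ ≤ 1 / 2) :
    ‖∏ i, Y i‖ < 1 := by
  rw [norm_prod]
  calc ∏ i, ‖Y i‖ ≤ ∏ _i : Fin 9, (1 / 2 : ℝ) :=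
        Finset.prod_le_prod (fun _ _ => norm_nonneg _) fun i _ => hY i
    _ < 1 := by simp; norm_num

/-- `expForm` vanishes to order `d` at the origin. -/
theorem IsWeakJacobiFormE8.exists_expForm_bound_pow (h : IsWeakJacobiFormE8 k m φ) {d : ℕ}
    (hv : TwistVanishes m φ 1 0 d) :
    ∃ M, 0 ≤ M ∧ ∀ X : Fin 9 → ℂ, (∀ i, X i ≠ 0) → (∀ i, ‖X i‖ ≤ 2) → ∀ s : ℂ, s ≠ 0 →
      ‖s‖ < 1 / 8 → ‖expForm m φ (fun i => s * X i)‖ ≤ M * ‖s‖ ^ d := by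
  classical
  obtain ⟨M, hM0, hM⟩ := h.expForm_bound (r := fun _ => 1 / 2) (fun _ => by norm_num)
    (by simp; norm_num)
  refine ⟨M / (1 / 8) ^ d, by positivity, fun X hX0 hX2 s hs0 hs => ?_⟩
  have hsmall : ∀ μ t : ℂ, ‖μ‖ < 1 / 4 → ‖t‖ < 1 / 8 → ∀ i, ‖μ + t * X i‖ ≤ 1 / 2 := by
    intro μ t hμ ht i
    calc ‖μ + t * X i‖ ≤ ‖μ‖ + ‖t‖ * ‖X i‖ := by
          rw [← norm_mul]; exact norm_add_le _ _
      _ ≤ 1 / 4 + 1 / 8 * 2 := by gcongr; exact hX2 i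
      _ = 1 / 2 := by norm_num
  have key : ∀ μ : ℂ, μ ≠ 0 → ‖μ‖ < 1 / 4 → (∀ i, μ + s * X i ≠ 0) →
      ‖expForm m φ (fun i => μ + s * X i)‖ ≤ M / (1 / 8) ^ d * ‖s‖ ^ d := by
    intro μ hμ0 hμ hμs
    set S : Finset ℂ := univ.image fun i => -μ / X i with hS
    have hSmem : ∀ t : ℂ, t ∉ S ↔ ∀ i, μ + t * X i ≠ 0 := by
      intro t
      simp only [hS, Finset.mem_image, Finset.mem_univ, true_and, not_exists]
      refine forall_congr' fun i => not_congr ?_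
      rw [div_eq_iff (hX0 i)]
      constructor
      · intro hh; rw [← hh]; ring
      · intro hh; linear_combination -hh
    obtain ⟨g, hg1, hg2, hg3⟩ := exists_extension_of_finite (U := Metric.ball (0 : ℂ) (1 / 8))
      Metric.isOpen_ball S (M := M) (fun t => expForm m φ fun i => μ + t * X i)
      (by
        rintro t ⟨ht, htS⟩
        have ht' := (hSmem t).1 htS
        have hd := h.expForm_differentiableAt ht' (norm_prod_lt_one_of_le_half
          (hsmall μ t hμ (by simpa using ht)))
        exact (DifferentiableAt.comp (g := expForm m φ) t hd
          (by fun_prop)).differentiableWithinAt)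
      (by
        rintro t ⟨ht, htS⟩
        exact hM _ ((hSmem t).1 htS) (hsmall μ t hμ (by simpa using ht)))
    have hgO : g =O[𝓝[≠] 0] fun t => t ^ d := by
      set c := Complex.log μ / (2 * πC * I) with hc
      have hqc : qExp c = μ := qExp_log hμ0
      have hcim : 0 < c.im := by
        have h1 : ‖qExp c‖ < 1 := by rw [hqc]; linarith
        rw [norm_qExp, Real.exp_lt_one_iff] at h1
        have := Real.pi_pos
        by_contra hcc
        push Not at hcc
        nlinarith
      set y : ℂ → Fin 9 → ℂ :=
        fun t i => c + Complex.log ((μ + t * X i) / μ) / (2 * πC * I) with hy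
      have hyd : DifferentiableAt ℂ y 0 := by
        refine differentiableAt_pi.2 fun i => ?_
        simp only [hy, div_eq_mul_inv _ (2 * πC * I)]
        refine (differentiableAt_const _).add (DifferentiableAt.mul_const ?_ _)
        refine DifferentiableAt.clog (by fun_prop) ?_
        simp [hμ0]
      have hy0 : y 0 = fun _ => c := by
        funext i
        simp [hy, hμ0]
      have hO := (h.coordForm_isBigO hv hyd hcim hy0).mono (nhdsWithin_le_nhds (s := {0}ᶜ))
      refine hO.congr' ?_ EventuallyEq.rfl
      have h0S : (0 : ℂ) ∉ S := (hSmem 0).2 (by simpa using hμ0)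
      have hSc : ∀ᶠ t in 𝓝 (0 : ℂ), t ∉ S :=
        S.finite_toSet.isClosed.isOpen_compl.mem_nhds (by simpa using h0S)
      have hball : ∀ᶠ t in 𝓝 (0 : ℂ), ‖t‖ < 1 / 8 := by
        filter_upwards [Metric.ball_mem_nhds (0 : ℂ) (by norm_num : (0 : ℝ) < 1 / 8)] with t ht
        simpa using ht
      filter_upwards [nhdsWithin_le_nhds hSc, nhdsWithin_le_nhds hball] with t ht ht8
      rw [hg3 t ht, h.expForm_eq_local (y := fun _ => c) ((hSmem t).1 ht)
        (norm_prod_lt_one_of_le_half (hsmall μ t hμ ht8))]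
      simp only [hqc, hy]
    have := norm_le_of_isBigO_pow (by norm_num) hg1 hg2 d hgO hs
    rwa [hg3 s ((hSmem s).2 hμs)] at this
  have hcont : ContinuousAt (fun μ : ℂ => ‖expForm m φ fun i => μ + s * X i‖) 0 := by
    refine ContinuousAt.norm ?_
    refine ContinuousAt.comp (g := expForm m φ) (f := fun μ i => μ + s * X i) ?_ (by fun_prop)
    refine (h.expForm_differentiableAt ?_ ?_).continuousAt
    · intro i; simpa using ⟨hs0, hX0 i⟩
    · exact norm_prod_lt_one_of_le_half (hsmall 0 s (by simp) hs)
  have hlim : Tendsto (fun μ : ℂ => ‖expForm m φ fun i => μ + s * X i‖) (𝓝[≠] 0)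
      (𝓝 ‖expForm m φ fun i => s * X i‖) := by
    have := hcont.tendsto
    simp only [zero_add] at this
    exact this.mono_left nhdsWithin_le_nhds
  refine le_of_tendsto hlim ?_
  have hball : ∀ᶠ μ in 𝓝 (0 : ℂ), ‖μ‖ < 1 / 4 := by
    filter_upwards [Metric.ball_mem_nhds (0 : ℂ) (by norm_num : (0 : ℝ) < 1 / 4)] with t ht
    simpa using ht
  have hne : ∀ᶠ μ in 𝓝 (0 : ℂ), ∀ i, μ + s * X i ≠ 0 := by
    rw [eventually_all]
    intro i
    have : ContinuousAt (fun μ : ℂ => μ + s * X i) 0 := by fun_prop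
    exact this.eventually_ne (by simpa using ⟨hs0, hX0 i⟩)
  filter_upwards [nhdsWithin_le_nhds hball, nhdsWithin_le_nhds hne, self_mem_nhdsWithin]
    with μ h1 h2 h3
  exact key μ h3 h1 h2

theorem exists_norm_qExp_latCoord_le :
    ∃ δ > 0, ∀ z : Fin 8 → ℂ, ‖z‖ < δ → ∀ i, ‖qExp (latCoord z i)‖ ≤ 2 := by
  have hev : ∀ᶠ z in 𝓝 (0 : Fin 8 → ℂ), ∀ i, ‖qExp (latCoord z i)‖ < 2 := by
    rw [eventually_all]
    intro i
    have hc : Continuous fun z => ‖qExp (latCoord z i)‖ :=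
      (differentiable_qExp.continuous.comp (continuous_latCoord i)).norm
    refine hc.continuousAt.eventually_lt continuousAt_const ?_
    simp [latCoord_zero, qExp]
  obtain ⟨δ, hδ, hb⟩ := Metric.eventually_nhds_iff.1 hev
  exact ⟨δ, hδ, fun z hz i => (hb (by simpa using hz) i).le⟩

/-- Growth of `twist m φ 1 0` at the cusp. -/
theorem IsWeakJacobiFormE8.exists_twist_one_zero_bound (h : IsWeakJacobiFormE8 k m φ) {d : ℕ}
    (hv : TwistVanishes m φ 1 0 d) :
    ∃ M, 0 ≤ M ∧ ∃ δ > 0, ∀ τ : ℂ, 4 ≤ τ.im → ∀ z : Fin 8 → ℂ, ‖z‖ < δ →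
      ‖twist m φ 1 0 τ z‖ ≤ M * Real.exp (-(2 * Real.pi * τ.im) * ((d - 4 * m) / 9)) := by
  obtain ⟨M, hM0, hM⟩ := h.exists_expForm_bound_pow hv
  obtain ⟨δ, hδ, hX⟩ := exists_norm_qExp_latCoord_le
  refine ⟨M, hM0, δ, hδ, fun τ hτ z hz => ?_⟩
  set y : Fin 9 → ℂ := fun i => τ / 9 + latCoord z i with hy
  have hysum : ∑ i, y i = τ := by
    simp only [hy, Finset.sum_add_distrib, sum_latCoord]
    simp
    ring
  have hyz : ∑ i, (y i - τ / 9) • cv (latVec i) = z := by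
    simp only [hy, add_sub_cancel_left, sum_latCoord_smul]
  have h1 := coordForm_eq_twist (m := m) (φ := φ) y
  rw [hysum, hyz, ← h.expForm_qExp (by rw [hysum]; linarith)] at h1
  simp only [hy, qExp_add] at h1
  have hs : ‖qExp (τ / 9)‖ = Real.exp (-(2 * Real.pi * (τ.im / 9))) := by
    rw [norm_qExp]
    congr 3
    simp
  have hs8 : ‖qExp (τ / 9)‖ < 1 / 8 := by
    rw [hs]
    have hpi := Real.pi_gt_three
    have h2 : Real.exp (-(2 * Real.pi * (τ.im / 9))) ≤ Real.exp (-(8 / 3)) := by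
      rw [Real.exp_le_exp]
      nlinarith
    refine h2.trans_lt ?_
    rw [Real.exp_neg, inv_eq_one_div]
    refine one_div_lt_one_div_of_lt (by norm_num) ?_
    have h3 : Real.exp (8 / 3) = Real.exp 1 ^ 2 * Real.exp (2 / 3) := by
      rw [← Real.exp_nat_mul, ← Real.exp_add]; norm_num
    have h4 := Real.exp_one_gt_d9
    have h5 := Real.add_one_le_exp (2 / 3 : ℝ)
    rw [h3]
    have h6 : (2.7 : ℝ) ^ 2 ≤ Real.exp 1 ^ 2 := by gcongr; linarith
    nlinarith
  have h2 := hM (fun i => qExp (latCoord z i)) (fun i => qExp_ne_zero _) (hX z hz)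
    (qExp (τ / 9)) (qExp_ne_zero _) hs8
  rw [h1, norm_mul] at h2
  have h3 : ‖qExp (4 * m * τ / 9)‖ = Real.exp (-(2 * Real.pi * τ.im) * (4 * m / 9)) := by
    rw [norm_qExp]
    congr 1
    have : (4 * (m : ℂ) * τ / 9) = ((4 * m / 9 : ℝ) : ℂ) * τ := by push_cast; ring
    rw [this, Complex.im_ofReal_mul]
    ring
  have h4 : ‖qExp (τ / 9)‖ ^ d = Real.exp (-(2 * Real.pi * τ.im) * (4 * m / 9)) *
      Real.exp (-(2 * Real.pi * τ.im) * ((d - 4 * m) / 9)) := by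
    rw [hs, ← Real.exp_nat_mul, ← Real.exp_add]
    congr 1
    ring
  rw [h3, h4] at h2
  have hpos := Real.exp_pos (-(2 * Real.pi * τ.im) * (4 * (m : ℝ) / 9))
  refine le_of_mul_le_mul_left (h2.trans_eq ?_) hpos
  ring

/-- Boundedness of `twist m φ 0 1` at the cusp. -/
theorem IsWeakJacobiFormE8.exists_twist_zero_one_bound (h : IsWeakJacobiFormE8 k m φ) :
    ∃ M, 0 ≤ M ∧ ∃ δ > 0, ∀ τ : ℂ, 4 ≤ τ.im → ∀ z : Fin 8 → ℂ, ‖z‖ < δ →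
      ‖twist m φ 0 1 τ z‖ ≤ M := by
  obtain ⟨M, hM0, hM⟩ := h.expForm_bound (r := ![1 / 600, 2, 2, 2, 2, 2, 2, 2, 2])
    (by intro i; fin_cases i <;> simp)
    (by simp [Fin.prod_univ_succ]; norm_num)
  obtain ⟨δ, hδ, hX⟩ := exists_norm_qExp_latCoord_le
  refine ⟨2 ^ m * M, by positivity, δ, hδ, fun τ hτ z hz => ?_⟩
  set y : Fin 9 → ℂ := fun i => 1 / 9 + latCoord z i + (if i = 0 then τ - 1 else 0) with hy
  have hysum : ∑ i, y i = τ := by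
    simp only [hy, Finset.sum_add_distrib, sum_latCoord]
    simp
  have hyz : ∑ i, y i • cv (latVec i) = z + torsionVec := by
    have h0 : ∀ i : Fin 9, (if i = 0 then τ - 1 else 0 : ℂ) • cv (latVec i) = 0 := by
      intro i
      split_ifs with hi
      · subst hi; funext j; simp [latVec, cv]
      · exact zero_smul _ _
    simp only [hy, add_smul, Finset.sum_add_distrib, sum_latCoord_smul, h0, ← Finset.smul_sum,
      sum_latVec, smul_smul]
    simp [add_comm]
  have hyn : ∑ i, halfNorm i * y i = 8 / 9 - latCoord z 0 := by
    have h1 : ∀ i, halfNorm i * y i = 1 / 9 + latCoord z i -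
        (if i = 0 then 1 / 9 + latCoord z 0 else 0) := by
      intro i
      fin_cases i <;> simp [hy, halfNorm]
    simp only [h1, Finset.sum_sub_distrib, Finset.sum_add_distrib, sum_latCoord]
    simp
    ring
  have hY : ‖expForm m φ (fun i => qExp (y i))‖ ≤ M := by
    have hreal : ‖qExp (1 / 9)‖ = 1 := by
      rw [norm_qExp]; norm_num
    have hτq : ‖qExp (τ - 1)‖ ≤ 1 / 1200 := by
      rw [norm_qExp]
      have hpi := Real.pi_gt_three
      have h2 : Real.exp (-(2 * Real.pi * (τ - 1).im)) ≤ Real.exp (-24) := by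
        rw [Real.exp_le_exp]
        simp
        nlinarith
      refine h2.trans ?_
      rw [Real.exp_neg, inv_eq_one_div]
      refine one_div_le_one_div_of_le (by norm_num) ?_
      have h3 : Real.exp 24 = Real.exp 1 ^ 24 := by
        rw [← Real.exp_nat_mul]; norm_num
      rw [h3]
      have h4 : (2 : ℝ) ≤ Real.exp 1 := by linarith [Real.exp_one_gt_d9]
      calc (1200 : ℝ) ≤ 2 ^ 24 := by norm_num
        _ ≤ _ := by gcongr
    have hXz := hX z hz
    refine hM _ (fun i => qExp_ne_zero _) fun i => ?_
    have hnorm : ‖qExp (y i)‖ = ‖qExp (latCoord z i)‖ *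
        ‖qExp (if i = 0 then τ - 1 else 0)‖ := by
      rw [hy, qExp_add, qExp_add, norm_mul, norm_mul, hreal, one_mul]
    rw [hnorm]
    by_cases hi : i = 0
    · subst hi
      simp only [if_true, Matrix.cons_val_zero]
      have := mul_le_mul (hXz 0) hτq (norm_nonneg _) (by norm_num)
      linarith
    · have hr : (![1 / 600, 2, 2, 2, 2, 2, 2, 2, 2] : Fin 9 → ℝ) i = 2 := by
        fin_cases i <;> simp at hi ⊢
      have h0 : ‖qExp 0‖ = 1 := by simp [qExp]
      rw [hr, if_neg hi, h0, mul_one]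
      exact hXz i
  rw [h.expForm_qExp (by rw [hysum]; linarith)] at hY
  unfold coordForm at hY
  rw [hysum, hyz, hyn, norm_mul] at hY
  have htw : ‖twist m φ 0 1 τ z‖ = ‖φ τ (z + torsionVec)‖ := by
    simp [twist]
  have hq : ‖qExp (m * (8 / 9 - latCoord z 0))‖ * ‖qExp (latCoord z 0)‖ ^ m = 1 := by
    rw [norm_qExp, norm_qExp, ← Real.exp_nat_mul, ← Real.exp_add, Real.exp_eq_one_iff]
    have : ((m : ℂ) * (8 / 9 - latCoord z 0)).im = -(m * (latCoord z 0).im) := by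
      have h8 : ((8 : ℂ) / 9).im = 0 := by simp
      rw [← Complex.ofReal_natCast, Complex.im_ofReal_mul, Complex.sub_im, h8]
      ring
    rw [this]
    ring
  rw [htw]
  calc ‖φ τ (z + torsionVec)‖
      = ‖qExp (latCoord z 0)‖ ^ m *
        (‖qExp (m * (8 / 9 - latCoord z 0))‖ * ‖φ τ (z + torsionVec)‖) := by
          rw [← mul_assoc, mul_comm (_ ^ m), hq, one_mul]
    _ ≤ 2 ^ m * M := by
          gcongr
          exact hX z hz 0

section LevelOne
open UpperHalfPlane ModularForm MatrixGroups

theorem inv_im_pos {τ : ℂ} (hτ : 0 < τ.im) : 0 < (-1 / τ).im := by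
  have := (⟨τ, hτ⟩ : ℍ).im_inv_neg_coe_pos
  rw [show -1 / τ = (-τ)⁻¹ by rw [inv_neg, neg_div, one_div]]
  exact this

theorem slash_S_apply (f : ℍ → ℂ) (w : ℤ) (z : ℍ) :
    (f ∣[w] ModularGroup.S) z = f ⟨-1 / (z : ℂ), inv_im_pos z.im_pos⟩ * (z : ℂ) ^ (-w) := by
  rw [SL_slash_apply, UpperHalfPlane.modular_S_smul, ModularGroup.denom_S]
  congr 2
  ext
  simp [neg_div, inv_neg]

theorem slash_T_apply (f : ℍ → ℂ) (w : ℤ) (z : ℍ) :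
    (f ∣[w] ModularGroup.T) z =
      f ⟨(z : ℂ) + 1, by simpa using z.im_pos⟩ := by
  rw [SL_slash_apply, modular_T_smul]
  have h1 : denom (ModularGroup.T : GL (Fin 2) ℝ) z = 1 := by
    rw [ModularGroup.denom_apply]
    simp [ModularGroup.T]
  rw [h1, one_zpow, mul_one]
  congr 1
  ext
  simp [add_comm]

/-- A holomorphic function on the upper half plane transforming like a level one modular form of
negative weight and bounded at the cusp vanishes. -/
theorem eq_zero_of_neg_weight {f : ℂ → ℂ} (hd : DifferentiableOn ℂ f {τ : ℂ | 0 < τ.im}) {w : ℤ}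
    (hw : w < 0) (hT : ∀ τ : ℂ, 0 < τ.im → f (τ + 1) = f τ)
    (hS : ∀ τ : ℂ, 0 < τ.im → f (-1 / τ) = τ ^ w * f τ)
    (hb : ∃ M A : ℝ, ∀ τ : ℂ, A ≤ τ.im → 0 < τ.im → ‖f τ‖ ≤ M) {τ : ℂ} (hτ : 0 < τ.im) :
    f τ = 0 := by
  set g : ℍ → ℂ := fun z => f z with hg
  have gS : g ∣[w] ModularGroup.S = g := by
    funext z
    rw [slash_S_apply]
    simp only [hg]
    rw [hS z z.im_pos, mul_comm, ← mul_assoc, ← zpow_add₀ z.ne_zero]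
    simp
  have gT : g ∣[w] ModularGroup.T = g := by
    funext z
    rw [slash_T_apply]
    exact hT z z.im_pos
  let F : ModularForm 𝒮ℒ w :=
    { toFun := g
      slash_action_eq' := by
        rintro A ⟨A, rfl⟩
        exact SlashInvariantForm.slash_action_generators_SL2Z gS gT A
      holo' := by
        rw [UpperHalfPlane.mdifferentiable_iff]
        refine hd.congr fun z hz => ?_
        simp [hg, ofComplex_apply_of_im_pos hz]
      bdd_at_cusps' := by
        intro c hc
        rw [Subgroup.IsArithmetic.isCusp_iff_isCusp_SL2Z] at hc
        rw [OnePoint.isBoundedAt_iff_forall_SL2Z hc]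
        intro γ _
        rw [SlashInvariantForm.slash_action_generators_SL2Z gS gT]
        obtain ⟨M, A, hMA⟩ := hb
        exact isBoundedAtImInfty_iff.2 ⟨M, A, fun z hz => hMA z hz z.im_pos⟩ }
  have := congrFun (ModularFormClass.levelOne_neg_weight_eq_zero hw F) ⟨τ, hτ⟩
  exact this

theorem eta_pow_add_one {τ : ℂ} (hτ : 0 < τ.im) :
    ModularForm.eta (τ + 1) ^ 24 = ModularForm.eta τ ^ 24 := by
  have := congrFun discriminant_T_invariant ⟨τ, hτ⟩
  rw [slash_T_apply] at this
  simpa [discriminant] using this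

theorem eta_pow_inv {τ : ℂ} (hτ : 0 < τ.im) :
    ModularForm.eta (-1 / τ) ^ 24 = τ ^ 12 * ModularForm.eta τ ^ 24 := by
  have hτ0 : τ ≠ 0 := by rintro rfl; simp at hτ
  have := congrFun discriminant_S_invariant ⟨τ, hτ⟩
  rw [slash_S_apply] at this
  simp only [discriminant] at this
  rw [← this, mul_comm, mul_assoc]
  have h2 : τ ^ (-(12 : ℤ)) * τ ^ 12 = 1 := by
    rw [zpow_neg, inv_mul_eq_one₀ (zpow_ne_zero _ hτ0)]; norm_cast
  change _ = _ * (τ ^ (-(12 : ℤ)) * τ ^ 12)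
  rw [h2, mul_one]

theorem exists_eta_zpow_bound (e : ℤ) : ∃ A : ℝ, ∀ τ : ℂ, A ≤ τ.im → 0 < τ.im →
    ‖(ModularForm.eta τ ^ 24) ^ e‖ ≤ 2 * Real.exp (-(2 * Real.pi * τ.im) * e) := by
  have ht : Tendsto (fun x : ℍ => ‖(∏' n : ℕ, (1 - eta_q n x) ^ 24) ^ e‖) atImInfty (𝓝 1) := by
    have h1 : ContinuousAt (fun x : ℂ => ‖x ^ e‖) 1 :=
      (continuousAt_zpow₀ 1 e (Or.inl one_ne_zero)).norm
    have := h1.tendsto.comp tendsto_atImInfty_tprod_one_sub_eta_q_pow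
    simpa [Function.comp_def] using this
  have hev := ht.eventually (gt_mem_nhds (by norm_num : (1 : ℝ) < 2))
  obtain ⟨A, -, hA⟩ := (atImInfty_basis.eventually_iff).1 hev
  refine ⟨A, fun τ hτA hτ => ?_⟩
  have h2 := hA (x := ⟨τ, hτ⟩) hτA
  have h3 := discriminant_eq_q_prod ⟨τ, hτ⟩
  simp only [discriminant] at h3
  rw [show ModularForm.eta τ ^ 24 = _ from h3, mul_zpow, norm_mul, mul_comm]
  refine mul_le_mul h2.le ?_ (norm_nonneg _) (by norm_num)
  rw [norm_zpow, Function.Periodic.norm_qParam, Real.exp_mul, Real.rpow_intCast]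
  apply le_of_eq
  congr 2
  simp

end LevelOne

section Vanishing

variable {p r : ℤ} {d : ℕ}

theorem IsWeakJacobiFormE8.twistVanishes_add (h : IsWeakJacobiFormE8 k m φ)
    (hv : TwistVanishes m φ p r d) : TwistVanishes m φ p (p + r) d := by
  intro τ hτ z
  have h1 := (hv (τ + 1) (by simpa using hτ) z).const_mul_left
    (Complex.exp (m * πC * I * (p ^ 2 * (8 / 9))))⁻¹
  refine h1.congr_left fun x => ?_
  rw [h.twist_add_one p r hτ, inv_mul_cancel_left₀ (Complex.exp_ne_zero _)]

theorem IsWeakJacobiFormE8.twistVanishes_inv (h : IsWeakJacobiFormE8 k m φ)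
    (hv : TwistVanishes m φ p r d) : TwistVanishes m φ r (-p) d := by
  intro τ hτ z
  have hτ0 : τ ≠ 0 := by rintro rfl; simp at hτ
  set c : ℂ → ℂ := fun x => (τ ^ k * Complex.exp (m * πC * I * (dotC (x • z) (x • z) / τ)) *
        Complex.exp (-(2 * m * πC * I * (p * r * (8 / 9)))))⁻¹ with hc
  have hne : ∀ x : ℂ, τ ^ k * Complex.exp (m * πC * I * (dotC (x • z) (x • z) / τ)) *
        Complex.exp (-(2 * m * πC * I * (p * r * (8 / 9)))) ≠ 0 := fun x =>
    mul_ne_zero (mul_ne_zero (zpow_ne_zero _ hτ0) (Complex.exp_ne_zero _)) (Complex.exp_ne_zero _)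
  have hcont : ContinuousAt c 0 := by
    refine ContinuousAt.inv₀ ?_ (hne 0)
    simp only [dotC_smul_left, dotC_smul_right]
    fun_prop
  have h1 := (hcont.tendsto.isBigO_one ℂ).mono (nhdsWithin_le_nhds (s := {0}ᶜ))
  have h2 := h1.mul (hv (-1 / τ) (inv_im_pos hτ) (τ⁻¹ • z))
  simp only [one_mul] at h2
  refine h2.congr_left fun x => ?_
  rw [smul_comm x τ⁻¹ z, h.twist_inv p r hτ, hc]
  exact inv_mul_cancel_left₀ (hne x) _

theorem IsWeakJacobiFormE8.twistVanishes_of_add_three (h : IsWeakJacobiFormE8 k m φ)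
    (hv : TwistVanishes m φ p (r + 3) d) : TwistVanishes m φ p r d := by
  intro τ hτ z
  refine (hv τ hτ z).congr_left fun x => ?_
  rw [h.twist_add_three p r hτ]

theorem IsWeakJacobiFormE8.twistVanishes_neg (h : IsWeakJacobiFormE8 k m φ)
    (hv : TwistVanishes m φ p r d) : TwistVanishes m φ (-p) (-r) d := by
  intro τ hτ z
  refine (hv τ hτ (-z)).congr_left fun x => ?_
  rw [h.twist_neg p r hτ, smul_neg]

theorem IsWeakJacobiFormE8.eq_zero_of_twistVanishes (h : IsWeakJacobiFormE8 k m φ)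
    (hv : ∀ d, TwistVanishes m φ 1 0 d) {τ : ℂ} (hτ : 0 < τ.im) (z : Fin 8 → ℂ) : φ τ z = 0 := by
  have key : ∀ u, twist m φ 1 0 τ u = 0 := by
    intro u
    obtain ⟨M, hM0, ε, hε, hM⟩ := h.exists_twist_bound 1 0 hτ (2 * ‖u‖)
    have hMu := (hM τ (Metric.mem_ball_self hε)).2
    have hle : ∀ d : ℕ, ‖twist m φ 1 0 τ u‖ ≤ M * (1 / 2) ^ d := by
      intro d
      have := norm_le_of_isBigO_pow (R := 2) (by norm_num)
        (h.twist_line_differentiable 1 0 hτ u).differentiableOn (M := M)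
        (fun x hx => hMu _ (by
          rw [norm_smul]
          rw [mem_ball_zero_iff] at hx
          gcongr)) d (hv d τ hτ u) (x := 1) (by norm_num)
      rw [one_smul, norm_one, one_pow, mul_one] at this
      rwa [one_div, inv_pow, ← div_eq_mul_inv]
    have hlim : Tendsto (fun d : ℕ => M * (1 / 2 : ℝ) ^ d) atTop (𝓝 (M * 0)) :=
      (tendsto_pow_atTop_nhds_zero_of_lt_one (by norm_num) (by norm_num)).const_mul M
    rw [mul_zero] at hlim
    exact norm_le_zero_iff.1 (ge_of_tendsto' hlim hle)
  have := key (z - τ • torsionVec)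
  unfold twist at this
  rcases mul_eq_zero.1 this with h1 | h1
  · exact absurd h1 (Complex.exp_ne_zero _)
  · simpa using h1

end Vanishing

/-- The coefficient of `x ^ d` of `twist m φ p r τ (x • z)`. -/
def leadCoeff (m : ℕ) (φ : ℂ → (Fin 8 → ℂ) → ℂ) (d : ℕ) (z : Fin 8 → ℂ) (p r : ℤ) (τ : ℂ) : ℂ :=
  limUnder (𝓝[≠] 0) fun x : ℂ => twist m φ p r τ (x • z) / x ^ d

section LeadCoeff

variable {p r : ℤ} {d : ℕ} {z : Fin 8 → ℂ}

theorem IsWeakJacobiFormE8.leadCoeff_spec (h : IsWeakJacobiFormE8 k m φ)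
    (hv : TwistVanishes m φ p r d) {τ : ℂ} (hτ : 0 < τ.im) {R M : ℝ} (hR : 0 < R)
    (hM : ∀ x : ℂ, ‖x‖ < R → ‖twist m φ p r τ (x • z)‖ ≤ M) :
    ‖leadCoeff m φ d z p r τ‖ ≤ M / R ^ d ∧ ∀ x : ℂ, x ≠ 0 → ‖x‖ < R →
      ‖twist m φ p r τ (x • z) / x ^ d - leadCoeff m φ d z p r τ‖ ≤
        2 * (M / R ^ d) / R * ‖x‖ := by
  obtain ⟨l, hl, h1, h2⟩ := exists_tendsto_div_pow hR
    (h.twist_line_differentiable p r hτ z).differentiableOn (M := M)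
    (fun x hx => hM x (by simpa using hx)) d (hv τ hτ z)
  have : leadCoeff m φ d z p r τ = l := hl.limUnder_eq
  rw [this]
  exact ⟨h1, h2⟩

theorem IsWeakJacobiFormE8.tendsto_leadCoeff (h : IsWeakJacobiFormE8 k m φ)
    (hv : TwistVanishes m φ p r d) {τ : ℂ} (hτ : 0 < τ.im) :
    Tendsto (fun x : ℂ => twist m φ p r τ (x • z) / x ^ d) (𝓝[≠] 0)
      (𝓝 (leadCoeff m φ d z p r τ)) := by
  obtain ⟨M, hM0, ε, hε, hM⟩ := h.exists_twist_bound p r hτ ‖z‖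
  obtain ⟨l, hl, -⟩ := exists_tendsto_div_pow one_pos
    (h.twist_line_differentiable p r hτ z).differentiableOn (M := M)
    (fun x hx => (hM τ (Metric.mem_ball_self hε)).2 _ (by
      rw [norm_smul]
      rw [mem_ball_zero_iff] at hx
      exact mul_le_of_le_one_left (norm_nonneg _) hx.le)) d (hv τ hτ z)
  have : leadCoeff m φ d z p r τ = l := hl.limUnder_eq
  rwa [this]

theorem IsWeakJacobiFormE8.leadCoeff_differentiableOn (h : IsWeakJacobiFormE8 k m φ)
    (hv : TwistVanishes m φ p r d) :
    DifferentiableOn ℂ (leadCoeff m φ d z p r) {τ : ℂ | 0 < τ.im} := by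
  have hloc : TendstoLocallyUniformlyOn
      (fun (x : ℂ) (τ : ℂ) => twist m φ p r τ (x • z) / x ^ d) (leadCoeff m φ d z p r)
      (𝓝[≠] 0) {τ : ℂ | 0 < τ.im} := by
    rw [Metric.tendstoLocallyUniformlyOn_iff]
    intro η hη τ₀ hτ₀
    obtain ⟨M, hM0, ε, hε, hM⟩ := h.exists_twist_bound p r hτ₀ ‖z‖
    refine ⟨Metric.ball τ₀ ε, mem_nhdsWithin_of_mem_nhds (Metric.ball_mem_nhds _ hε), ?_⟩
    have hsmall : ∀ᶠ x : ℂ in 𝓝[≠] 0, ‖x‖ < min 1 (η / (2 * M + 1)) := by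
      refine nhdsWithin_le_nhds ?_
      have := Metric.ball_mem_nhds (0 : ℂ) (ε := min 1 (η / (2 * M + 1))) (by positivity)
      filter_upwards [this] with x hx using by simpa using hx
    filter_upwards [hsmall, self_mem_nhdsWithin] with x hx hx0 τ hτ
    rw [lt_min_iff, lt_div_iff₀ (by positivity)] at hx
    have := (h.leadCoeff_spec hv (hM τ hτ).1 (z := z) one_pos (M := M) (fun x hx =>
      (hM τ hτ).2 _ (by
        rw [norm_smul]
        exact mul_le_of_le_one_left (norm_nonneg _) hx.le))).2 x hx0 hx.1
    rw [dist_comm, dist_eq_norm]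
    refine this.trans_lt ?_
    simp only [one_pow, div_one]
    nlinarith [norm_nonneg x]
  refine hloc.differentiableOn (Eventually.of_forall fun x τ hτ => ?_) isOpen_im_pos
  exact ((h.twist_differentiableAt p r differentiableAt_id (differentiableAt_const (x • z))
    hτ).div_const _).differentiableWithinAt

theorem IsWeakJacobiFormE8.leadCoeff_add_one (h : IsWeakJacobiFormE8 k m φ)
    (hv : TwistVanishes m φ p r d) {τ : ℂ} (hτ : 0 < τ.im) :
    leadCoeff m φ d z p r (τ + 1) =
      Complex.exp (m * πC * I * (p ^ 2 * (8 / 9))) * leadCoeff m φ d z p (p + r) τ := by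
  have h1 := h.tendsto_leadCoeff (z := z) hv (τ := τ + 1) (by simpa using hτ)
  have h2 := (h.tendsto_leadCoeff (z := z) (h.twistVanishes_add hv) hτ).const_mul
    (Complex.exp (m * πC * I * (p ^ 2 * (8 / 9))))
  refine tendsto_nhds_unique h1 (h2.congr fun x => ?_)
  rw [h.twist_add_one p r hτ, mul_div_assoc]

theorem IsWeakJacobiFormE8.leadCoeff_inv (h : IsWeakJacobiFormE8 k m φ)
    (hv : TwistVanishes m φ p r d) {τ : ℂ} (hτ : 0 < τ.im) :
    leadCoeff m φ d z p r (-1 / τ) = τ ^ (k + d) *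
      Complex.exp (-(2 * m * πC * I * (p * r * (8 / 9)))) * leadCoeff m φ d z r (-p) τ := by
  have hτ0 : τ ≠ 0 := by rintro rfl; simp at hτ
  have h1 := h.tendsto_leadCoeff (z := z) hv (inv_im_pos hτ)
  have hscale : Tendsto (fun x : ℂ => τ⁻¹ * x) (𝓝[≠] 0) (𝓝[≠] 0) := by
    refine tendsto_nhdsWithin_iff.2 ⟨?_, ?_⟩
    · have : Continuous fun x : ℂ => τ⁻¹ * x := by fun_prop
      exact (this.tendsto' 0 0 (by simp)).mono_left nhdsWithin_le_nhds
    · filter_upwards [self_mem_nhdsWithin] with x hx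
      exact mul_ne_zero (inv_ne_zero hτ0) hx
  have h1' := h1.comp hscale
  have h2 := h.tendsto_leadCoeff (z := z) (h.twistVanishes_inv hv) hτ
  have h3 : Tendsto (fun x : ℂ => τ ^ (k + d) *
      Complex.exp (m * πC * I * (dotC (x • z) (x • z) / τ)) *
      Complex.exp (-(2 * m * πC * I * (p * r * (8 / 9))))) (𝓝[≠] 0)
      (𝓝 (τ ^ (k + d) * Complex.exp (-(2 * m * πC * I * (p * r * (8 / 9)))))) := by
    have hc : Continuous fun x : ℂ => τ ^ (k + d) *
      Complex.exp (m * πC * I * (dotC (x • z) (x • z) / τ)) *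
      Complex.exp (-(2 * m * πC * I * (p * r * (8 / 9)))) := by
      simp only [dotC_smul_left, dotC_smul_right]
      fun_prop
    exact (hc.tendsto' 0 _ (by simp [dotC])).mono_left nhdsWithin_le_nhds
  refine tendsto_nhds_unique h1' ((h3.mul h2).congr' ?_)
  filter_upwards [self_mem_nhdsWithin] with x hx
  have hx0 : x ≠ 0 := hx
  simp only [Function.comp_apply]
  rw [mul_smul, h.twist_inv p r hτ, zpow_add₀ hτ0, zpow_natCast, mul_pow, inv_pow]
  field_simp

theorem IsWeakJacobiFormE8.leadCoeff_add_three (h : IsWeakJacobiFormE8 k m φ)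
    {τ : ℂ} (hτ : 0 < τ.im) :
    leadCoeff m φ d z p (r + 3) τ = leadCoeff m φ d z p r τ := by
  unfold leadCoeff
  simp only [h.twist_add_three p r hτ]

theorem IsWeakJacobiFormE8.leadCoeff_neg (h : IsWeakJacobiFormE8 k m φ)
    (hv : TwistVanishes m φ p r d) {τ : ℂ} (hτ : 0 < τ.im) :
    leadCoeff m φ d z (-p) (-r) τ = (-1) ^ d * leadCoeff m φ d z p r τ := by
  have hneg : Tendsto (fun x : ℂ => -x) (𝓝[≠] 0) (𝓝[≠] 0) := by
    refine tendsto_nhdsWithin_iff.2 ⟨?_, ?_⟩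
    · exact (continuous_neg.tendsto' (0 : ℂ) 0 (by simp)).mono_left nhdsWithin_le_nhds
    · filter_upwards [self_mem_nhdsWithin] with x hx
      exact neg_ne_zero.2 hx
  have h1 := h.tendsto_leadCoeff (z := z) (h.twistVanishes_neg hv) hτ
  have h2 := ((h.tendsto_leadCoeff (z := z) hv hτ).comp hneg).const_mul ((-1) ^ d)
  refine tendsto_nhds_unique h1 (h2.congr fun x => ?_)
  simp only [Function.comp_apply]
  rw [h.twist_neg p r hτ, neg_smul, neg_pow x d, ← mul_div_assoc,
    mul_div_mul_left _ _ (pow_ne_zero _ (by norm_num))]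

end LeadCoeff

section WeightBound

variable {d : ℕ} {z : Fin 8 → ℂ}

theorem IsWeakJacobiFormE8.twistVanishes_zero (h : IsWeakJacobiFormE8 k m φ) (p r : ℤ) :
    TwistVanishes m φ p r 0 := by
  intro τ hτ z
  simp only [pow_zero]
  exact ((h.twist_line_differentiable p r hτ z).continuous.continuousAt (x := 0)).isBigO_one ℂ
    |>.mono nhdsWithin_le_nhds

theorem IsWeakJacobiFormE8.exists_leadCoeff_ne_zero (h : IsWeakJacobiFormE8 k m φ)
    (hne : ¬ ∀ τ : ℂ, 0 < τ.im → ∀ z, φ τ z = 0) :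
    ∃ d : ℕ, TwistVanishes m φ 1 0 d ∧
      ∃ (τ : ℂ) (z : Fin 8 → ℂ), 0 < τ.im ∧ leadCoeff m φ d z 1 0 τ ≠ 0 := by
  obtain ⟨d, hd, hd'⟩ : ∃ d, TwistVanishes m φ 1 0 d ∧ ¬ TwistVanishes m φ 1 0 (d + 1) := by
    by_contra! hcon
    refine hne fun τ hτ z => h.eq_zero_of_twistVanishes (fun d => ?_) hτ z
    induction d with
    | zero => exact h.twistVanishes_zero 1 0
    | succ d ih => exact hcon d ih
  refine ⟨d, hd, ?_⟩
  by_contra! hcon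
  refine hd' fun τ hτ z => ?_
  obtain ⟨M, -, ε, hε, hM⟩ := h.exists_twist_bound 1 0 hτ ‖z‖
  have hspec := (h.leadCoeff_spec (z := z) hd hτ one_pos fun x hx =>
    (hM τ (Metric.mem_ball_self hε)).2 (x • z) (by
      rw [norm_smul]
      exact mul_le_of_le_one_left (norm_nonneg z) hx.le)).2
  rw [hcon τ z hτ] at hspec
  refine IsBigO.of_bound (2 * (M / 1 ^ d) / 1) ?_
  have hball : ∀ᶠ x : ℂ in 𝓝[≠] 0, ‖x‖ < 1 :=
    nhdsWithin_le_nhds (continuous_norm.continuousAt.eventually_lt continuousAt_const (by simp))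
  filter_upwards [self_mem_nhdsWithin, hball] with x hx hx1
  have hxd : 0 < ‖x‖ ^ d := pow_pos (norm_pos_iff.2 hx) d
  have hb := hspec x hx hx1
  rw [sub_zero, norm_div, norm_pow, div_le_iff₀ hxd] at hb
  rw [norm_pow, pow_succ]
  linarith

theorem exp_eight_ninths_pow (m : ℕ) : exp (m * πC * I * (8 / 9)) ^ 9 = 1 := by
  rw [← exp_nat_mul]
  refine exp_eq_one_iff.2 ⟨4 * m, ?_⟩
  rw [πC]
  push_cast
  ring

theorem norm_exp_eight_ninths (m : ℕ) : ‖exp (m * πC * I * (8 / 9))‖ = 1 :=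
  norm_eq_one_of_pow_eq_one (exp_eight_ninths_pow m) (by norm_num)

/-- The product of the leading coefficients over the four lines of `𝔽₃²`. -/
def leadProd (m : ℕ) (φ : ℂ → (Fin 8 → ℂ) → ℂ) (d : ℕ) (z : Fin 8 → ℂ) (τ : ℂ) : ℂ :=
  leadCoeff m φ d z 0 1 τ * (leadCoeff m φ d z 1 0 τ *
    (leadCoeff m φ d z 1 1 τ * leadCoeff m φ d z 1 (-1) τ))

theorem IsWeakJacobiFormE8.twistVanishes_lines (h : IsWeakJacobiFormE8 k m φ)
    (hv : TwistVanishes m φ 1 0 d) :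
    TwistVanishes m φ 0 1 d ∧ TwistVanishes m φ 1 1 d ∧ TwistVanishes m φ 1 (-1) d := by
  have h11 : TwistVanishes m φ 1 1 d := by simpa using h.twistVanishes_add hv
  have h12 : TwistVanishes m φ 1 (-1 + 3) d := by simpa using h.twistVanishes_add h11
  refine ⟨?_, h11, h.twistVanishes_of_add_three h12⟩
  simpa using h.twistVanishes_neg (h.twistVanishes_inv hv)

theorem IsWeakJacobiFormE8.leadCoeff_lines_add_one (h : IsWeakJacobiFormE8 k m φ)
    (hv : TwistVanishes m φ 1 0 d) {τ : ℂ} (hτ : 0 < τ.im) :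
    leadCoeff m φ d z 0 1 (τ + 1) = leadCoeff m φ d z 0 1 τ ∧
    leadCoeff m φ d z 1 0 (τ + 1) =
      exp (m * πC * I * (8 / 9)) * leadCoeff m φ d z 1 1 τ ∧
    leadCoeff m φ d z 1 1 (τ + 1) =
      exp (m * πC * I * (8 / 9)) * leadCoeff m φ d z 1 (-1) τ ∧
    leadCoeff m φ d z 1 (-1) (τ + 1) =
      exp (m * πC * I * (8 / 9)) * leadCoeff m φ d z 1 0 τ := by
  obtain ⟨h01, h11, h1m⟩ := h.twistVanishes_lines hv
  refine ⟨?_, ?_, ?_, ?_⟩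
  · simpa using h.leadCoeff_add_one h01 hτ
  · simpa using h.leadCoeff_add_one hv hτ
  · rw [← h.leadCoeff_add_three (p := 1) (r := -1) hτ]
    simpa using h.leadCoeff_add_one h11 hτ
  · simpa using h.leadCoeff_add_one h1m hτ

theorem IsWeakJacobiFormE8.leadCoeff_lines_inv (h : IsWeakJacobiFormE8 k m φ)
    (hv : TwistVanishes m φ 1 0 d) {τ : ℂ} (hτ : 0 < τ.im) :
    leadCoeff m φ d z 0 1 (-1 / τ) = τ ^ (k + d) * leadCoeff m φ d z 1 0 τ ∧
    leadCoeff m φ d z 1 0 (-1 / τ) = τ ^ (k + d) * ((-1) ^ d * leadCoeff m φ d z 0 1 τ) ∧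
    leadCoeff m φ d z 1 1 (-1 / τ) =
      τ ^ (k + d) * exp (-(2 * m * πC * I * (8 / 9))) * leadCoeff m φ d z 1 (-1) τ ∧
    leadCoeff m φ d z 1 (-1) (-1 / τ) =
      τ ^ (k + d) * exp (2 * m * πC * I * (8 / 9)) *
        ((-1) ^ d * leadCoeff m φ d z 1 1 τ) := by
  obtain ⟨h01, h11, h1m⟩ := h.twistVanishes_lines hv
  refine ⟨?_, ?_, ?_, ?_⟩
  · simpa using h.leadCoeff_inv h01 hτ
  · rw [← h.leadCoeff_neg h01 hτ]
    simpa using h.leadCoeff_inv hv hτ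
  · simpa using h.leadCoeff_inv h11 hτ
  · rw [← h.leadCoeff_neg h11 hτ]
    simpa using h.leadCoeff_inv h1m hτ

theorem IsWeakJacobiFormE8.leadProd_add_one (h : IsWeakJacobiFormE8 k m φ)
    (hv : TwistVanishes m φ 1 0 d) {τ : ℂ} (hτ : 0 < τ.im) :
    leadProd m φ d z (τ + 1) ^ 3 = leadProd m φ d z τ ^ 3 := by
  obtain ⟨h1, h2, h3, h4⟩ := h.leadCoeff_lines_add_one (z := z) hv hτ
  simp only [leadProd, h1, h2, h3, h4]
  linear_combination (leadCoeff m φ d z 0 1 τ * (leadCoeff m φ d z 1 0 τ *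
    (leadCoeff m φ d z 1 1 τ * leadCoeff m φ d z 1 (-1) τ))) ^ 3 * exp_eight_ninths_pow m

theorem IsWeakJacobiFormE8.leadProd_inv (h : IsWeakJacobiFormE8 k m φ)
    (hv : TwistVanishes m φ 1 0 d) {τ : ℂ} (hτ : 0 < τ.im) :
    leadProd m φ d z (-1 / τ) = (τ ^ (k + d)) ^ 4 * leadProd m φ d z τ := by
  obtain ⟨h1, h2, h3, h4⟩ := h.leadCoeff_lines_inv (z := z) hv hτ
  have hs : ((-1 : ℂ) ^ d) ^ 2 = 1 := by rw [← pow_mul, mul_comm, pow_mul]; simp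
  have he : exp (-(2 * m * πC * I * (8 / 9))) *
      exp (2 * m * πC * I * (8 / 9)) = 1 := by rw [← exp_add]; simp
  simp only [leadProd, h1, h2, h3, h4]
  generalize exp (-(2 * m * πC * I * (8 / 9))) = a at he ⊢
  generalize exp (2 * m * πC * I * (8 / 9)) = b at he ⊢
  generalize (-1 : ℂ) ^ d = s at hs ⊢
  generalize τ ^ (k + d) = w
  linear_combination (w ^ 4 * (leadCoeff m φ d z 0 1 τ * (leadCoeff m φ d z 1 0 τ *
    (leadCoeff m φ d z 1 1 τ * leadCoeff m φ d z 1 (-1) τ)))) * (s ^ 2 * he + hs)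

theorem IsWeakJacobiFormE8.leadCoeff_lines_bound (h : IsWeakJacobiFormE8 k m φ)
    (hv : TwistVanishes m φ 1 0 d) (z : Fin 8 → ℂ) :
    ∃ M : ℝ, 0 ≤ M ∧ ∀ τ : ℂ, 4 ≤ τ.im → ‖leadCoeff m φ d z 0 1 τ‖ ≤ M ∧
      ‖leadCoeff m φ d z 1 0 τ‖ ≤ M * Real.exp (-(2 * Real.pi * τ.im) * ((d - 4 * m) / 9)) := by
  obtain ⟨M₁, hM₁, δ₁, hδ₁, hb₁⟩ := h.exists_twist_one_zero_bound hv
  obtain ⟨M₂, hM₂, δ₂, hδ₂, hb₂⟩ := h.exists_twist_zero_one_bound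
  have hz : 0 < ‖z‖ + 1 := by positivity
  have hsmall : ∀ δ : ℝ, 0 < δ → ∀ x : ℂ, ‖x‖ < δ / (‖z‖ + 1) → ‖x • z‖ < δ := by
    intro δ hδ x hx
    rw [lt_div_iff₀ hz] at hx
    rw [norm_smul]
    nlinarith [norm_nonneg x]
  refine ⟨max (M₁ / (δ₁ / (‖z‖ + 1)) ^ d) (M₂ / (δ₂ / (‖z‖ + 1)) ^ d),
    le_max_of_le_left (by positivity), fun τ hτ => ⟨?_, ?_⟩⟩
  · exact (h.leadCoeff_spec (h.twistVanishes_lines hv).1 (by linarith) (div_pos hδ₂ hz)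
      fun x hx => hb₂ τ hτ _ (hsmall δ₂ hδ₂ x hx)).1.trans (le_max_right _ _)
  · refine (h.leadCoeff_spec hv (by linarith) (div_pos hδ₁ hz)
      fun x hx => hb₁ τ hτ _ (hsmall δ₁ hδ₁ x hx)).1.trans ?_
    rw [mul_div_right_comm]
    exact mul_le_mul_of_nonneg_right (le_max_left _ _) (Real.exp_pos _).le

theorem IsWeakJacobiFormE8.leadProd_bound (h : IsWeakJacobiFormE8 k m φ)
    (hv : TwistVanishes m φ 1 0 d) (z : Fin 8 → ℂ) :
    ∃ M : ℝ, 0 ≤ M ∧ ∀ τ : ℂ, 4 ≤ τ.im →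
      ‖leadProd m φ d z τ ^ 3‖ ≤ M * Real.exp (-(2 * Real.pi * τ.im) * (d - 4 * m)) := by
  obtain ⟨M, hM, hb⟩ := h.leadCoeff_lines_bound hv z
  refine ⟨M ^ 12, by positivity, fun τ hτ => ?_⟩
  have hτ0 : 0 < τ.im := by linarith
  have hadd : ∀ τ : ℂ, (τ + 1).im = τ.im := fun τ => by simp
  obtain ⟨-, h2, -, -⟩ := h.leadCoeff_lines_add_one (z := z) hv hτ0
  obtain ⟨-, h2', -, -⟩ := h.leadCoeff_lines_add_one (z := z) hv (τ := τ + 1) (by rwa [hadd])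
  obtain ⟨-, -, h3, -⟩ := h.leadCoeff_lines_add_one (z := z) hv hτ0
  have e1 : ‖leadCoeff m φ d z 1 1 τ‖ = ‖leadCoeff m φ d z 1 0 (τ + 1)‖ := by
    rw [h2, norm_mul, norm_exp_eight_ninths, one_mul]
  have e2 : ‖leadCoeff m φ d z 1 (-1) τ‖ = ‖leadCoeff m φ d z 1 0 (τ + 1 + 1)‖ := by
    rw [h2', h3, norm_mul, norm_mul, norm_exp_eight_ninths, one_mul, one_mul]
  have b1 := (hb (τ + 1) (by rwa [hadd])).2
  have b2 := (hb (τ + 1 + 1) (by rwa [hadd, hadd])).2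
  rw [← e1, hadd] at b1
  rw [← e2, hadd, hadd] at b2
  obtain ⟨b3, b4⟩ := hb τ hτ
  have hexp : Real.exp (-(2 * Real.pi * τ.im) * (d - 4 * m)) =
      Real.exp (-(2 * Real.pi * τ.im) * ((d - 4 * m) / 9)) ^ 9 := by
    rw [← Real.exp_nat_mul]
    congr 1
    push_cast
    ring
  rw [hexp, leadProd, norm_pow, norm_mul, norm_mul, norm_mul]
  set E := Real.exp (-(2 * Real.pi * τ.im) * ((d - 4 * m) / 9))
  calc _ ≤ (M * (M * E * (M * E * (M * E)))) ^ 3 := by gcongr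
    _ = M ^ 12 * E ^ 9 := by ring

theorem IsWeakJacobiFormE8.leadProd_eq_zero (h : IsWeakJacobiFormE8 k m φ)
    (hv : TwistVanishes m φ 1 0 d) (hk : k < -(4 * (m : ℤ))) {τ : ℂ} (hτ : 0 < τ.im) :
    leadProd m φ d z τ = 0 := by
  obtain ⟨h01, h11, h1m⟩ := h.twistVanishes_lines hv
  have hne : ∀ τ : ℂ, 0 < τ.im → ModularForm.eta τ ^ 24 ≠ 0 := fun τ hτ =>
    pow_ne_zero _ (ModularForm.eta_ne_zero hτ)
  obtain ⟨e, he⟩ : ∃ e : ℤ, e = -((d : ℤ) - 4 * m) := ⟨_, rfl⟩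
  have hzero : leadProd m φ d z τ ^ 3 * (ModularForm.eta τ ^ 24) ^ e = 0 := by
    refine eq_zero_of_neg_weight (w := 12 * (k + 4 * m)) ?_ (by omega) ?_ ?_ ?_ hτ
      (f := fun τ => leadProd m φ d z τ ^ 3 * (ModularForm.eta τ ^ 24) ^ e)
    · refine DifferentiableOn.mul (DifferentiableOn.pow ?_ 3) fun τ hτ => ?_
      · exact (h.leadCoeff_differentiableOn h01).mul ((h.leadCoeff_differentiableOn hv).mul
          ((h.leadCoeff_differentiableOn h11).mul (h.leadCoeff_differentiableOn h1m)))
      · exact (((ModularForm.differentiableAt_eta_of_mem_upperHalfPlaneSet hτ).pow 24).zpow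
          (Or.inl (hne τ hτ))).differentiableWithinAt
    · intro τ hτ
      simp only [h.leadProd_add_one hv hτ, eta_pow_add_one hτ]
    · intro τ hτ
      have hτ0 : τ ≠ 0 := by rintro rfl; simp at hτ
      simp only [h.leadProd_inv hv hτ, eta_pow_inv hτ]
      have hw : τ ^ (12 * (k + 4 * m)) = ((τ ^ (k + d)) ^ 4) ^ 3 * (τ ^ 12) ^ e := by
        rw [← pow_mul, ← zpow_natCast, ← zpow_natCast, ← zpow_mul, ← zpow_mul, ← zpow_add₀ hτ0]
        congr 1
        push_cast
        rw [he]
        ring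
      rw [hw, mul_pow, mul_zpow]
      ring
    · obtain ⟨M, hM, hb⟩ := h.leadProd_bound hv z
      obtain ⟨A, hA⟩ := exists_eta_zpow_bound e
      refine ⟨2 * M, max A 4, fun τ hτ hτ0 => ?_⟩
      have b1 := hb τ ((le_max_right _ _).trans hτ)
      have b2 := hA τ ((le_max_left _ _).trans hτ) hτ0
      rw [norm_mul]
      refine (mul_le_mul b1 b2 (norm_nonneg _) (by positivity)).trans (le_of_eq ?_)
      have : Real.exp (-(2 * Real.pi * τ.im) * (d - 4 * m)) *
          Real.exp (-(2 * Real.pi * τ.im) * e) = 1 := by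
        rw [← Real.exp_add, he]
        push_cast
        rw [Real.exp_eq_one_iff]
        ring
      linear_combination (2 * M) * this
  exact eq_zero_of_pow_eq_zero
    ((mul_eq_zero.1 hzero).resolve_right (zpow_ne_zero _ (hne τ hτ)))

theorem IsWeakJacobiFormE8.leadCoeff_eq_zero (h : IsWeakJacobiFormE8 k m φ)
    (hv : TwistVanishes m φ 1 0 d) (hk : k < -(4 * (m : ℤ))) {τ : ℂ} (hτ : 0 < τ.im) :
    leadCoeff m φ d z 1 0 τ = 0 := by
  obtain ⟨h01, h11, h1m⟩ := h.twistVanishes_lines hv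
  have an : ∀ {p r : ℤ}, TwistVanishes m φ p r d →
      AnalyticOnNhd ℂ (leadCoeff m φ d z p r) {τ : ℂ | 0 < τ.im} := fun hv =>
    (h.leadCoeff_differentiableOn hv).analyticOnNhd isOpen_im_pos
  have hT : ∀ τ : ℂ, 0 < τ.im → 0 < (τ - 1).im := fun τ hτ => by simpa using hτ
  have z10 : (∀ τ : ℂ, 0 < τ.im → leadCoeff m φ d z 1 1 τ = 0) →
      leadCoeff m φ d z 1 0 τ = 0 := fun hz => by
    have := (h.leadCoeff_lines_add_one (z := z) hv (hT τ hτ)).2.1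
    rwa [sub_add_cancel, hz _ (hT τ hτ), mul_zero] at this
  rcases (an h01).eq_zero_or_eq_zero_of_mul_eq_zero ((an hv).mul ((an h11).mul (an h1m)))
    (fun τ hτ => h.leadProd_eq_zero hv hk hτ) isPreconnected_im_pos with hz | hz
  · have := (h.leadCoeff_lines_inv (z := z) hv (inv_im_pos hτ)).2.1
    rw [hz _ (inv_im_pos hτ), mul_zero, mul_zero] at this
    rwa [show -1 / (-1 / τ) = τ by rw [div_div_eq_mul_div]; simp] at this
  rcases (an hv).eq_zero_or_eq_zero_of_mul_eq_zero ((an h11).mul (an h1m)) hz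
    isPreconnected_im_pos with hz | hz
  · exact hz τ hτ
  rcases (an h11).eq_zero_or_eq_zero_of_mul_eq_zero (an h1m) hz isPreconnected_im_pos with hz | hz
  · exact z10 hz
  · refine z10 fun τ hτ => ?_
    have := (h.leadCoeff_lines_add_one (z := z) hv (hT τ hτ)).2.2.1
    rwa [sub_add_cancel, hz _ (hT τ hτ), mul_zero] at this

end WeightBound

end WeakJacobiForms

/-- If φ is a non-zero W(E8)-invariant weak Jacobi form of weight k and
index m then k ≥ −4m. -/
theorem jacobi_weight_lower_bound (k : ℤ) (m : ℕ) (φ : ℂ → (Fin 8 → ℂ) → ℂ)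
    (h : IsWeakJacobiFormE8 k m φ)
    (hne : ¬ ∀ τ : ℂ, 0 < τ.im → ∀ z, φ τ z = 0) :
    -(4 * (m : ℤ)) ≤ k := by
  by_contra! hk
  obtain ⟨d, hv, τ, z, hτ, hlead⟩ := h.exists_leadCoeff_ne_zero hne
  exact hlead (h.leadCoeff_eq_zero hv hk hτ)

end E8Jacobi
end
end
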